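/- arXiv:1803.07992 — 9 statements merged into one kernel-verified Lean document; each statement's English description precedes it below -/
import Mathlib

section
/- Fix an integer g ≥ 1. Then the set of g-good quadruples (w₀, w₁, w₂, d) ∈ ℤ⁴₍>0₎ is infinite. -/
/-- A quadruple `(w0, w1, w2, d)` of positive integers is *good* if the weights are
pairwise coprime, each weight is less than `d`, and the congruence conditions of
Fletcher's smoothness criterion hold. -/
def IsGoodQuadruple (w0 w1 w2 d : ℕ) : Prop :=
  0 < w0 ∧ 0 < w1 ∧ 0 < w2 ∧ 0 < d ∧
  Nat.Coprime w0 w1 ∧ Nat.Coprime w0 w2 ∧ Nat.Coprime w1 w2 ∧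
  w0 < d ∧ w1 < d ∧ w2 < d ∧
  (∃ k : ℕ, 0 < k ∧ (d = k * w0 + w0 ∨ d = k * w0 + w1 ∨ d = k * w0 + w2)) ∧
  (∃ k : ℕ, 0 < k ∧ (d = k * w1 + w0 ∨ d = k * w1 + w1 ∨ d = k * w1 + w2)) ∧
  (∃ k : ℕ, 0 < k ∧ (d = k * w2 + w0 ∨ d = k * w2 + w1 ∨ d = k * w2 + w2)) ∧
  (∃ a b : ℕ, d = a * w1 + b * w2) ∧
  (∃ a b : ℕ, d = a * w0 + b * w2) ∧
  (∃ a b : ℕ, d = a * w0 + b * w1)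

/-- The genus of a quadruple, given by the genus formula for smooth weighted plane curves. -/
def genusOf (w0 w1 w2 d : ℕ) : ℚ :=
  (1 / 2 : ℚ) * ((d * ((d : ℚ) - w0 - w1 - w2)) / (w0 * w1 * w2)
    + (Nat.gcd w0 d : ℚ) / w0 + (Nat.gcd w1 d : ℚ) / w1 + (Nat.gcd w2 d : ℚ) / w2 - 1)

/-- A quadruple is `g`-good if it is good and its genus equals `g`. -/
def IsGGoodQuadruple (g w0 w1 w2 d : ℕ) : Prop :=
  IsGoodQuadruple w0 w1 w2 d ∧ genusOf w0 w1 w2 d = g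

/-!
A weighted curve of degree `ab + c` with pairwise coprime weights `a, b, c` has genus
`(a - 1)(b - 1) / (2c)`.  When `b = kc + 1` the degree is congruent to `a` modulo `c`, which makes
the quadruple good, and the genus becomes `(a - 1)k / 2`, independently of `c`.  Taking `a = 2` and
`k = 2g` leaves `c` free to range over the odd numbers.
-/

theorem exists_mul_add_eq_mul_add_mul {a b : ℕ} (hab : a.Coprime b) (c : ℕ) :
    ∃ m n : ℕ, a * b + c = m * a + n * b := by
  have hpred : a.pred * b.pred ≤ a * b + c :=
    (Nat.mul_le_mul a.pred_le b.pred_le).trans (Nat.le_add_right _ _)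
  have hgcd : a.gcd b ∣ a * b + c := hab.gcd_eq_one ▸ one_dvd _
  obtain ⟨m, n, h⟩ := Nat.exists_add_mul_eq_of_gcd_dvd_of_mul_pred_le a b _ hgcd hpred
  exact ⟨m, n, h.symm⟩

theorem genusOf_mul_add {a b c : ℕ} (ha : 0 < a) (hb : 0 < b) (hc : 0 < c)
    (hac : a.Coprime c) (hbc : b.Coprime c) :
    genusOf a b c (a * b + c) = ((a : ℚ) - 1) * (b - 1) / (2 * c) := by
  have gcd_a : a.gcd (a * b + c) = 1 := by simpa using hac
  have gcd_b : b.gcd (a * b + c) = 1 := by simpa using hbc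
  have gcd_c : c.gcd (a * b + c) = 1 := by simpa using (hac.mul_left hbc).symm
  rw [genusOf, gcd_a, gcd_b, gcd_c]
  push_cast
  field_simp
  ring

theorem isGoodQuadruple_mul_add {a c k : ℕ} (ha : 0 < a) (hc : 0 < c)
    (hab : a.Coprime (k * c + 1)) (hac : a.Coprime c) :
    IsGoodQuadruple a (k * c + 1) c (a * (k * c + 1) + c) := by
  have hbc : (k * c + 1).Coprime c := by simp
  have hd_mod_c : a * (k * c + 1) + c = (a * k + 1) * c + a := by ring
  have hd_mod_a : a * (k * c + 1) + c = (k * c + 1) * a + c := by ring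
  have hb : 0 < k * c + 1 := Nat.succ_pos _
  generalize k * c + 1 = b at *
  have ha_lt : a < a * b + c := lt_add_of_le_of_pos (Nat.le_mul_of_pos_right a hb) hc
  have hb_lt : b < a * b + c := lt_add_of_le_of_pos (Nat.le_mul_of_pos_left b ha) hc
  have hc_lt : c < a * b + c := lt_add_of_pos_left c (Nat.mul_pos ha hb)
  exact ⟨ha, hb, hc, ha.trans ha_lt, hab, hac, hbc, ha_lt, hb_lt, hc_lt,
    ⟨b, hb, .inr (.inr hd_mod_a)⟩,
    ⟨a, ha, .inr (.inr rfl)⟩,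
    ⟨a * k + 1, Nat.succ_pos _, .inl hd_mod_c⟩,
    ⟨a, 1, by rw [one_mul]⟩,
    ⟨b, 1, by rw [one_mul, hd_mod_a]⟩,
    exists_mul_add_eq_mul_add_mul hab c⟩

-- `hgenus` is `(a - 1) * k = 2 * g` without the truncated subtraction.
theorem isGGoodQuadruple_mul_add {a c g k : ℕ} (ha : 0 < a) (hc : 0 < c)
    (hab : a.Coprime (k * c + 1)) (hac : a.Coprime c) (hgenus : a * k = 2 * g + k) :
    IsGGoodQuadruple g a (k * c + 1) c (a * (k * c + 1) + c) := by
  refine ⟨isGoodQuadruple_mul_add ha hc hab hac, ?_⟩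
  have hgenus_cast : (a : ℚ) * k = 2 * g + k := mod_cast hgenus
  calc genusOf a (k * c + 1) c (a * (k * c + 1) + c)
      = ((a : ℚ) - 1) * ((k * c + 1 : ℕ) - 1) / (2 * c) :=
        genusOf_mul_add ha (Nat.succ_pos _) hc hac (by simp)
    _ = ((a : ℚ) - 1) * k / 2 := by push_cast; field_simp; ring
    _ = g := by linarith

/-- For any fixed `g ≥ 1`, there are infinitely many `g`-good quadruples. -/
theorem infinite_gGoodQuadruples (g : ℕ) (hg : 1 ≤ g) :
    {q : ℕ × ℕ × ℕ × ℕ | IsGGoodQuadruple g q.1 q.2.1 q.2.2.1 q.2.2.2}.Infinite := by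
  have hgood (s : ℕ) : IsGGoodQuadruple g 2 (2 * g * (2 * s + 1) + 1) (2 * s + 1)
      (2 * (2 * g * (2 * s + 1) + 1) + (2 * s + 1)) :=
    isGGoodQuadruple_mul_add two_pos (Nat.succ_pos _) (by simp [mul_assoc]) (by simp) (by ring)
  refine Set.infinite_of_injective_forall_mem (f := fun s ↦ (_, _, _, _)) (fun s t hst ↦ ?_) hgood
  simp only [Prod.mk.injEq] at hst
  lia
end

section
/- Fix an integer g ≥ 1 and let d be a positive integer with (2g+2) ∣ (d+1). Then the quadruple (1, (d−1)/2, (d+1)/(2g+2), d) is a g-good quadruple; in particular the three weights 1, (d−1)/2, (d+1)/(2g+2) are pairwise coprime, each is strictly less than d, conditions (i) and (ii) in the definition of a good quadruple hold, and the genus of this quadruple equals g. -/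
/-! With `n = (d - 1) / 2` and `m = (d + 1) / (2g + 2)`, the monomials `x ^ d`, `x * y ^ 2` and
`y * z ^ (g + 1)` all have weighted degree `d` for the weights `(1, n, m)`: the quadruple is that of
a chain polynomial `x ^ d + x * y ^ r + y * z ^ s`, i.e. `d = r * n + 1 = s * m + n`. These two
equations force `n`, `m` and `d` to be pairwise coprime, and then the genus formula collapses to
`r * (s - 1) / 2`. -/

section ChainWeights

variable {n m r s d : ℕ}

theorem coprime_weight_degree_of_eq_mul_add_one (hr : d = r * n + 1) : n.Coprime d := by
  simp [hr]

theorem coprime_weights_of_chain (hr : d = r * n + 1) (hs : d = s * m + n) : n.Coprime m := by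
  have h : n.Coprime (s * m + n) := hs ▸ coprime_weight_degree_of_eq_mul_add_one hr
  exact (Nat.coprime_add_self_right.1 h).coprime_mul_left_right

theorem coprime_last_weight_degree_of_chain (hr : d = r * n + 1) (hs : d = s * m + n) :
    m.Coprime d := by
  rw [hs, Nat.coprime_mul_right_add_right]
  exact (coprime_weights_of_chain hr hs).symm

theorem isGoodQuadruple_of_chain (hn : 0 < n) (hm : 0 < m) (hs₀ : 0 < s)
    (hr : d = r * n + 1) (hs : d = s * m + n) : IsGoodQuadruple 1 n m d := by
  have hm_le : m ≤ s * m := Nat.le_mul_of_pos_left m hs₀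
  have hr₀ : 0 < r := Nat.pos_of_ne_zero (by rintro rfl; omega)
  exact ⟨one_pos, hn, hm, by omega,
    Nat.coprime_one_left n, Nat.coprime_one_left m, coprime_weights_of_chain hr hs,
    by omega, by omega, by omega,
    ⟨d - 1, by omega, .inl (by omega)⟩, ⟨r, hr₀, .inl hr⟩, ⟨s, hs₀, .inr (.inl hs)⟩,
    ⟨1, s, by omega⟩, ⟨d, 0, by simp⟩, ⟨d, 0, by simp⟩⟩

theorem genusOf_one_of_coprime (hn : n.Coprime d) (hm : m.Coprime d) :
    genusOf 1 n m d = (d * (d - 1 - n - m) / (n * m) + 1 / n + 1 / m : ℚ) / 2 := by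
  simp only [genusOf, Nat.gcd_one_left, hn.gcd_eq_one, hm.gcd_eq_one, Nat.cast_one]
  ring

theorem genusOf_of_chain (hn : 0 < n) (hm : 0 < m) (hr : d = r * n + 1) (hs : d = s * m + n) :
    genusOf 1 n m d = (r * (s - 1) / 2 : ℚ) := by
  have hn₀ : (n : ℚ) ≠ 0 := by positivity
  have hm₀ : (m : ℚ) ≠ 0 := by positivity
  have hr' : (d - 1 : ℚ) = r * n := sub_eq_of_eq_add (mod_cast hr)
  have hs' : (d - n : ℚ) = s * m := sub_eq_of_eq_add (mod_cast hs)
  have hnum : (d * (d - 1 - n - m) + m + n : ℚ) = r * (s - 1) * (n * m) := by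
    calc (d * (d - 1 - n - m) + m + n : ℚ) = (d - 1) * (d - n - m) := by ring
      _ = r * n * (s * m - m) := by rw [hr', hs']
      _ = r * (s - 1) * (n * m) := by ring
  rw [genusOf_one_of_coprime (coprime_weight_degree_of_eq_mul_add_one hr)
    (coprime_last_weight_degree_of_chain hr hs)]
  field_simp
  linear_combination hnum

end ChainWeights

theorem gGood_of_dvd_general {g d : ℕ} (hd : 1 < d) (hdvd : (2 * g + 2) ∣ (d + 1)) :
    IsGGoodQuadruple g 1 ((d - 1) / 2) ((d + 1) / (2 * g + 2)) d := by
  set n := (d - 1) / 2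
  set m := (d + 1) / (2 * g + 2)
  have hdm : d + 1 = 2 * ((g + 1) * m) := by
    rw [← Nat.mul_div_cancel' hdvd]
    ring
  have hn : 0 < n := by omega
  have hm : 0 < m := Nat.div_pos (Nat.le_of_dvd d.succ_pos hdvd) (by omega)
  have hr : d = 2 * n + 1 := by omega
  have hs : d = (g + 1) * m + n := by omega
  refine ⟨isGoodQuadruple_of_chain hn hm g.succ_pos hr hs, ?_⟩
  rw [genusOf_of_chain hn hm hr hs]
  push_cast
  ring

/-- If `g ≥ 1` and `d` is a positive integer with `(2g+2) ∣ (d+1)`, then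
`(1, (d-1)/2, (d+1)/(2g+2), d)` is a `g`-good quadruple. -/
theorem gGood_of_dvd (g d : ℕ) (hg : 1 ≤ g) (hd : 0 < d) (hdvd : (2 * g + 2) ∣ (d + 1)) :
    IsGGoodQuadruple g 1 ((d - 1) / 2) ((d + 1) / (2 * g + 2)) d := by
  have hle := Nat.le_of_dvd d.succ_pos hdvd
  exact gGood_of_dvd_general (by omega) hdvd
end

section
/- Let (w₀, w₁, w₂, d) be a good quadruple. Then for every i ∈ {0,1,2}, either wᵢ divides d or gcd(wᵢ, d) = 1. -/
theorem dvd_or_coprime_iff_of_modEq {a m n : ℕ} (h : m ≡ n [MOD a]) :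
    a ∣ m ∨ a.Coprime m ↔ a ∣ n ∨ a.Coprime n :=
  or_congr (h.dvd_iff dvd_rfl) (by rw [a.coprime_comm, a.coprime_comm, Nat.Coprime, h.gcd_eq])

theorem dvd_or_coprime_of_good_general {ι : Type*} {w : ι → ℕ} {d : ℕ}
    (hw : Pairwise (Function.onFun Nat.Coprime w)) (hd : ∀ i, ∃ j, d ≡ w j [MOD w i]) (i : ι) :
    w i ∣ d ∨ (w i).Coprime d := by
  obtain ⟨j, hj⟩ := hd i
  rw [dvd_or_coprime_iff_of_modEq hj]
  obtain rfl | hij := eq_or_ne i j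
  · exact Or.inl dvd_rfl
  · exact Or.inr (hw hij)

namespace IsGoodQuadruple

variable {w0 w1 w2 d : ℕ}

theorem pairwise_coprime (h : IsGoodQuadruple w0 w1 w2 d) :
    Pairwise (Function.onFun Nat.Coprime ![w0, w1, w2]) := by
  obtain ⟨-, -, -, -, h01, h02, h12, -⟩ := h
  intro i j hij
  fin_cases i <;> fin_cases j
  exacts [absurd rfl hij, h01, h02, h01.symm, absurd rfl hij, h12, h02.symm, h12.symm,
    absurd rfl hij]

theorem exists_modEq (h : IsGoodQuadruple w0 w1 w2 d) (i : Fin 3) :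
    ∃ j, d ≡ ![w0, w1, w2] j [MOD ![w0, w1, w2] i] := by
  have modEq_of_eq {w v k : ℕ} (hd : d = k * w + v) : d ≡ v [MOD w] := by
    simp [hd, Nat.ModEq]
  obtain ⟨-, -, -, -, -, -, -, -, -, -, ⟨_, -, h0⟩, ⟨_, -, h1⟩, ⟨_, -, h2⟩, -⟩ := h
  fin_cases i
  · rcases h0 with h0 | h0 | h0
    exacts [⟨0, modEq_of_eq h0⟩, ⟨1, modEq_of_eq h0⟩, ⟨2, modEq_of_eq h0⟩]
  · rcases h1 with h1 | h1 | h1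
    exacts [⟨0, modEq_of_eq h1⟩, ⟨1, modEq_of_eq h1⟩, ⟨2, modEq_of_eq h1⟩]
  · rcases h2 with h2 | h2 | h2
    exacts [⟨0, modEq_of_eq h2⟩, ⟨1, modEq_of_eq h2⟩, ⟨2, modEq_of_eq h2⟩]

end IsGoodQuadruple

/-- For a good quadruple `(w0, w1, w2, d)`, each weight either divides `d` or is coprime to `d`. -/
theorem dvd_or_coprime_of_good (w0 w1 w2 d : ℕ) (h : IsGoodQuadruple w0 w1 w2 d) :
    (w0 ∣ d ∨ Nat.Coprime w0 d) ∧ (w1 ∣ d ∨ Nat.Coprime w1 d) ∧ (w2 ∣ d ∨ Nat.Coprime w2 d) := by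
  have hdvd := dvd_or_coprime_of_good_general h.pairwise_coprime h.exists_modEq
  exact ⟨hdvd 0, hdvd 1, hdvd 2⟩
end

section
/- Let g ≥ 1 be an integer and let (w₀, w₁, w₂, d) be a g-good quadruple, with associated polytope P. Then the number of points of ℤ³ lying in the intrinsic (relative) interior of P equals g. -/
/-- The coercion of an integer lattice point of `ℤ³` to `ℝ³`. -/
def toR3 (v : Fin 3 → ℤ) : Fin 3 → ℝ := fun i => (v i : ℝ)

/-- The lattice points in the first octant lying on the plane `x*w0 + y*w1 + z*w2 = d`. -/
def latticePts (w0 w1 w2 d : ℕ) : Set (Fin 3 → ℤ) :=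
  {v | (∀ i, 0 ≤ v i) ∧ v 0 * (w0 : ℤ) + v 1 * (w1 : ℤ) + v 2 * (w2 : ℤ) = (d : ℤ)}

/-- The polytope associated to a quadruple: the convex hull in `ℝ³` of the lattice points
in the first octant on the plane `x*w0 + y*w1 + z*w2 = d`. -/
def polytopeOf (w0 w1 w2 d : ℕ) : Set (Fin 3 → ℝ) :=
  convexHull ℝ (toR3 '' latticePts w0 w1 w2 d)

/-!
The lattice points in the relative interior of `P` are exactly those with positive coordinates. If
a linear functional attains its maximum over `P` at a positive lattice point, comparing it with the
lattice points provided by (i) and (ii) shows that it is constant on `P`; hence such a point lies in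
the relative interior. Conversely, by (i) each coordinate is positive somewhere on `P`, so it is
positive throughout the relative interior.

To count them, slice by the first coordinate. Popoviciu's formula expresses the number of positive
solutions of `b * w₁ + c * w₂ = m` as a linear term in `m` plus two sawtooth functions, of `m`
modulo `w₁` and modulo `w₂`. The linear terms sum to the main term of the genus. The congruences in
(i) turn each sum of sawtooth values, up to one boundary term, into a sum over full periods or over
a progression symmetric about the centre of oddness, which vanishes; the boundary terms
give the `gcd` terms of the genus.
-/

section Progression

variable {G : Type*} [AddCommGroup G]

theorem sum_range_nsmul_shift {M : Type*} [AddCommMonoid M] [IsRightCancelAdd M] (f : G → M)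
    {x : G} {n : ℕ} (hx : n • x = 0) (a : G) (s : ℕ) :
    ∑ i ∈ Finset.range n, f (a + s • x + i • x) = ∑ i ∈ Finset.range n, f (a + i • x) := by
  induction s with
  | zero => simp
  | succ s ih =>
    have h := Finset.sum_range_succ' (fun i => f (a + s • x + i • x)) n
    rw [Finset.sum_range_succ, hx, zero_nsmul] at h
    rw [← ih, add_right_cancel h]
    simp only [succ_nsmul, add_assoc, add_left_comm, add_comm]

variable {M : Type*} [AddCommGroup M] {f : G → M} {c : G}

theorem sum_range_nsmul_reflect (hf : ∀ t, f (c - t) = -f t) (a x : G) (n : ℕ) :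
    ∑ i ∈ Finset.range n, f (c + x - n • x - a + i • x) =
      -∑ i ∈ Finset.range n, f (a + i • x) := by
  rw [← Finset.sum_range_reflect, ← Finset.sum_neg_distrib]
  refine Finset.sum_congr rfl fun i hi => ?_
  have hsplit : n • x = (n - 1 - i) • x + i • x + x := by
    rw [← add_nsmul, ← succ_nsmul]
    congr 1
    have := Finset.mem_range.1 hi
    omega
  rw [← hf, hsplit]
  congr 1
  abel

theorem sum_range_nsmul_eq_zero_of_reflect [IsAddTorsionFree M]
    (hf : ∀ t, f (c - t) = -f t) {a x : G} {n : ℕ} (h : c + x - n • x - a = a) :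
    ∑ i ∈ Finset.range n, f (a + i • x) = 0 := by
  have := sum_range_nsmul_reflect hf a x n
  rw [h] at this
  exact self_eq_neg.1 this

theorem sum_range_nsmul_eq_zero_of_nsmul_eq_zero [IsAddTorsionFree M]
    (hf : ∀ t, f (c - t) = -f t) {a x : G} {n : ℕ} (hx : n • x = 0)
    (hgen : ∀ t, ∃ s : ℕ, s • x = t) :
    ∑ i ∈ Finset.range n, f (a + i • x) = 0 := by
  obtain ⟨s, hs⟩ := hgen (c + x - n • x - a - a)
  have := sum_range_nsmul_reflect hf a x n
  rw [show c + x - n • x - a = a + s • x by rw [hs]; abel, sum_range_nsmul_shift f hx] at this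
  exact self_eq_neg.1 this

end Progression

section Residues

variable {n u x d : ℕ}

theorem gcd_eq_one_of_natCast_eq (hx : x.Coprime n) (h : (d : ZMod n) = x) :
    Nat.gcd n d = 1 := by
  rw [Nat.gcd_comm, ((ZMod.natCast_eq_natCast_iff d x n).1 h).gcd_eq]
  exact hx

theorem gcd_eq_left_of_natCast_eq_zero (h : (d : ZMod n) = 0) : Nat.gcd n d = n :=
  Nat.gcd_eq_left ((ZMod.natCast_eq_zero_iff d n).1 h)

variable [NeZero n]

theorem exists_nsmul_natCast_eq (hx : x.Coprime n) (t : ZMod n) :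
    ∃ s : ℕ, s • (x : ZMod n) = t := by
  refine ⟨(t * (x : ZMod n)⁻¹).val, ?_⟩
  rw [nsmul_eq_mul, ZMod.natCast_zmod_val, mul_assoc, mul_comm _ (x : ZMod n),
    ZMod.coe_mul_inv_eq_one x hx, mul_one]

theorem zmod_val_neg_one_sub (t : ZMod n) : (-1 - t).val + t.val + 1 = n := by
  have ht := t.val_lt
  have hcast : ((n - 1 - t.val : ℕ) : ZMod n) = -1 - t := by
    rw [Nat.cast_sub (by omega), Nat.cast_sub (by omega)]
    simp
  rw [← hcast, ZMod.val_natCast_of_lt (by omega)]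
  omega

end Residues

section Sawtooth

/-- The least positive integer `b` with `b * u = t` in `ZMod n`, for `u` coprime to `n`. -/
def leastPosCoeff (u n : ℕ) (t : ZMod n) : ℕ := (t * (u : ZMod n)⁻¹ - 1).val + 1

/-- The sawtooth function of period `n`: twice the deviation of `leastPosCoeff u n t` from
`(n + 1) / 2`, the mean of `1, …, n`. It is odd about `u / 2`. -/
def sawtooth (u n : ℕ) (t : ZMod n) : ℤ := 2 * leastPosCoeff u n t - (n + 1)

variable {n u x d k : ℕ}

theorem leastPosCoeff_pos (u : ℕ) (t : ZMod n) : 0 < leastPosCoeff u n t := Nat.succ_pos _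

theorem sawtooth_self (hu : u.Coprime n) : sawtooth u n u = 1 - n := by
  rw [sawtooth, leastPosCoeff, ZMod.coe_mul_inv_eq_one u hu, sub_self, ZMod.val_zero]
  push_cast
  ring

variable [NeZero n]

theorem leastPosCoeff_le (u : ℕ) (t : ZMod n) : leastPosCoeff u n t ≤ n := ZMod.val_lt _

theorem leastPosCoeff_mul (hu : u.Coprime n) (t : ZMod n) :
    (leastPosCoeff u n t : ZMod n) * u = t := by
  rw [leastPosCoeff, Nat.cast_succ, ZMod.natCast_zmod_val, sub_add_cancel, mul_assoc,
    mul_comm _ (u : ZMod n), ZMod.coe_mul_inv_eq_one u hu, mul_one]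

theorem leastPosCoeff_intCast_mul (hu : u.Coprime n) (b : ℤ) :
    (leastPosCoeff u n (b * u) : ℤ) = (b - 1) % n + 1 := by
  rw [leastPosCoeff, mul_assoc, ZMod.coe_mul_inv_eq_one u hu, mul_one, Nat.cast_succ,
    ← Int.cast_one, ← Int.cast_sub, ZMod.val_intCast]

theorem exists_eq_leastPosCoeff_add_mul (hu : u.Coprime n) {b : ℤ} (hb : 0 < b) :
    ∃ j : ℕ, b = leastPosCoeff u n (b * u) + j * n := by
  obtain ⟨j, hj⟩ := Int.eq_ofNat_of_zero_le
    (Int.ediv_nonneg (Int.sub_nonneg_of_le hb) n.cast_nonneg : 0 ≤ (b - 1) / n)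
  refine ⟨j, ?_⟩
  rw [leastPosCoeff_intCast_mul hu, ← hj]
  linarith [Int.emod_add_ediv_mul (b - 1) n]

theorem sawtooth_sub (hu : u.Coprime n) (t : ZMod n) :
    sawtooth u n (u - t) = -sawtooth u n t := by
  have harg : (u - t) * (u : ZMod n)⁻¹ - 1 = -1 - (t * (u : ZMod n)⁻¹ - 1) := by
    rw [sub_mul, ZMod.coe_mul_inv_eq_one u hu]
    ring
  have := zmod_val_neg_one_sub (t * (u : ZMod n)⁻¹ - 1)
  rw [sawtooth, sawtooth, leastPosCoeff, leastPosCoeff, harg]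
  omega

theorem sawtooth_zero (hu : u.Coprime n) : sawtooth u n 0 = n - 1 := by
  rw [← sub_self (u : ZMod n), sawtooth_sub hu, sawtooth_self hu, neg_sub]

theorem sum_sawtooth_natCast_mul_succ (hu : u.Coprime n) (x l : ℕ) :
    ∑ j ∈ Finset.range (l + 1), sawtooth u n (j * x) =
      ∑ j ∈ Finset.range l, sawtooth u n (x + j * x) + (n - 1) := by
  rw [Finset.sum_range_succ', Nat.cast_zero, zero_mul, sawtooth_zero hu]
  simp only [Nat.cast_succ, add_mul, one_mul, add_comm]

theorem sum_sawtooth_natCast_mul (hu : u.Coprime n) (hx : x.Coprime n) (hk : 0 < k)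
    (hdk : (d : ZMod n) = k * x)
    (hd : (d : ZMod n) = 0 ∨ (d : ZMod n) = x ∨ (d : ZMod n) = u) :
    ∑ j ∈ Finset.range k, sawtooth u n (j * x) = n - Nat.gcd n d := by
  have hodd := sawtooth_sub hu
  have hgen := exists_nsmul_natCast_eq hx
  obtain ⟨l, rfl⟩ := Nat.exists_eq_succ_of_ne_zero hk.ne'
  have hsplit := sum_sawtooth_natCast_mul_succ hu x l
  simp only [← nsmul_eq_mul (α := ZMod n)] at hsplit ⊢
  rcases hd with hd | hd | hd
  · have hsum := sum_range_nsmul_eq_zero_of_nsmul_eq_zero (a := 0) hodd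
      (by rw [nsmul_eq_mul, ← hdk, hd]) hgen
    simp only [zero_add] at hsum
    rw [hsum, gcd_eq_left_of_natCast_eq_zero hd, sub_self]
  · rw [hsplit, gcd_eq_one_of_natCast_eq hx hd, Nat.cast_one,
      sum_range_nsmul_eq_zero_of_nsmul_eq_zero hodd ?_ hgen, zero_add]
    rw [nsmul_eq_mul]
    push_cast at hdk
    linear_combination hd - hdk
  · rw [hsplit, gcd_eq_one_of_natCast_eq hu hd, Nat.cast_one,
      sum_range_nsmul_eq_zero_of_reflect hodd ?_, zero_add]
    rw [nsmul_eq_mul]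
    push_cast at hdk
    linear_combination hdk - hd

theorem sum_sawtooth_self_add_natCast_mul (hu : u.Coprime n) (hx : x.Coprime n) (hk : 0 < k)
    (hdk : (d : ZMod n) = u + k * x)
    (hd : (d : ZMod n) = 0 ∨ (d : ZMod n) = x ∨ (d : ZMod n) = u) :
    ∑ j ∈ Finset.range k, sawtooth u n (u + j * x) = 1 - Nat.gcd n d := by
  have hodd := sawtooth_sub hu
  rcases hd with hd | hd | hd
  · obtain ⟨l, rfl⟩ := Nat.exists_eq_succ_of_ne_zero hk.ne'
    have hsum := sum_range_nsmul_eq_zero_of_reflect (a := u + x) (x := x) (n := l) hodd (by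
      rw [nsmul_eq_mul]
      push_cast at hdk
      linear_combination hdk - hd)
    have hsplit : ∑ j ∈ Finset.range (l + 1), sawtooth u n (u + j * x) =
        ∑ j ∈ Finset.range l, sawtooth u n (u + x + j • (x : ZMod n)) + (1 - n) := by
      rw [Finset.sum_range_succ', Nat.cast_zero, zero_mul, add_zero, sawtooth_self hu]
      refine congrArg (· + (1 - (n : ℤ))) (Finset.sum_congr rfl fun j _ => congrArg _ ?_)
      rw [nsmul_eq_mul]
      push_cast
      ring
    rw [hsplit, hsum, zero_add, gcd_eq_left_of_natCast_eq_zero hd]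
  · rw [gcd_eq_one_of_natCast_eq hx hd, Nat.cast_one, sub_self]
    simp only [← nsmul_eq_mul]
    refine sum_range_nsmul_eq_zero_of_reflect hodd ?_
    rw [nsmul_eq_mul]
    linear_combination hdk - hd
  · rw [gcd_eq_one_of_natCast_eq hu hd, Nat.cast_one, sub_self]
    simp only [← nsmul_eq_mul]
    refine sum_range_nsmul_eq_zero_of_nsmul_eq_zero hodd ?_ (exists_nsmul_natCast_eq hx)
    rw [nsmul_eq_mul]
    linear_combination hd - hdk

end Sawtooth

section LatticePoints

/-- The points of `ℤ^ι` with positive coordinates on the hyperplane `∑ i, v i * w i = d`. -/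
def posLatticePts {ι : Type*} [Fintype ι] (w : ι → ℕ) (d : ℕ) : Set (ι → ℤ) :=
  {v | (∀ i, 0 < v i) ∧ ∑ i, v i * w i = d}

variable {ι : Type*} [Fintype ι] {w : ι → ℕ} {d : ℕ}

theorem finite_posLatticePts (hw : ∀ i, 0 < w i) (d : ℕ) : (posLatticePts w d).Finite := by
  refine (Set.Finite.pi' fun _ => Set.finite_Icc 0 (d : ℤ)).subset fun v hv i => ?_
  have hnonneg (i : ι) : 0 ≤ v i * w i := mul_nonneg (hv.1 i).le (w i).cast_nonneg
  refine ⟨(hv.1 i).le, ?_⟩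
  calc v i ≤ v i * w i := le_mul_of_one_le_right (hv.1 i).le (mod_cast hw i)
    _ ≤ ∑ i, v i * w i := Finset.single_le_sum (fun i _ => hnonneg i) (Finset.mem_univ i)
    _ = d := hv.2

theorem posLatticePts_eq_empty (hd : d < ∑ i, w i) : posLatticePts w d = ∅ := by
  refine Set.eq_empty_of_forall_notMem fun v hv => hd.not_ge ?_
  zify
  rw [← hv.2]
  exact Finset.sum_le_sum fun i _ => le_mul_of_one_le_left (w i).cast_nonneg (hv.1 i)

theorem ncard_posLatticePts_comp_perm (σ : Equiv.Perm ι) (w : ι → ℕ) (d : ℕ) :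
    (posLatticePts (w ∘ σ) d).ncard = (posLatticePts w d).ncard := by
  refine Set.ncard_congr (fun v _ => v ∘ σ.symm) (fun v hv => ⟨fun i => hv.1 _, ?_⟩)
    (fun v v' _ _ h => σ.symm.surjective.injective_comp_right h)
    fun v hv => ⟨v ∘ σ, ⟨fun i => hv.1 _, ?_⟩, by simp [Function.comp_assoc]⟩
  · rw [← hv.2, ← Equiv.sum_comp σ]
    simp
  · rw [← hv.2]
    exact Equiv.sum_comp σ fun i => v i * w i

theorem cons_mem_posLatticePts {n x : ℕ} {w : Fin n → ℕ} {a : ℤ} {v : Fin n → ℤ} :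
    (Fin.cons a v : Fin (n + 1) → ℤ) ∈ posLatticePts (Fin.cons x w : Fin (n + 1) → ℕ) d ↔
      0 < a ∧ (∀ i, 0 < v i) ∧ a * x + ∑ i, v i * w i = d := by
  simp [posLatticePts, Fin.forall_fin_succ, Fin.sum_univ_succ, and_assoc]

theorem posLatticePts_cons_add {n : ℕ} (x : ℕ) (w : Fin n → ℕ) (d : ℕ) :
    posLatticePts (Fin.cons x w : Fin (n + 1) → ℕ) (d + x) =
      Fin.cons 1 '' posLatticePts w d ∪
        (· + Pi.single 0 1) '' posLatticePts (Fin.cons x w : Fin (n + 1) → ℕ) d := by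
  ext v
  induction v using Fin.consCases with | _ a v
  have hshift : (Fin.cons a v : Fin (n + 1) → ℤ) =
      (Fin.cons (a - 1) v : Fin (n + 1) → ℤ) + Pi.single 0 1 := by
    refine funext (Fin.cases ?_ fun i => ?_) <;> simp
  constructor
  · intro h
    obtain ⟨ha, hv, hsum⟩ := cons_mem_posLatticePts.1 h
    push_cast at hsum
    rcases (Int.add_one_le_iff.2 ha).eq_or_lt with rfl | ha
    · exact Or.inl ⟨v, ⟨hv, by linarith⟩, rfl⟩
    · refine Or.inr ⟨_, cons_mem_posLatticePts.2 ⟨?_, hv, ?_⟩, hshift.symm⟩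
      · linarith
      · linarith
  · rintro (⟨v', ⟨hv, hsum⟩, h⟩ | ⟨v', hv', h⟩)
    · obtain ⟨rfl, rfl⟩ := Fin.cons_inj.1 h
      refine cons_mem_posLatticePts.2 ⟨one_pos, hv, ?_⟩
      push_cast
      linarith
    · rw [hshift] at h
      obtain rfl := add_right_cancel h
      obtain ⟨ha, hv, hsum⟩ := cons_mem_posLatticePts.1 hv'
      refine cons_mem_posLatticePts.2 ⟨by linarith, hv, ?_⟩
      push_cast
      linarith

theorem ncard_posLatticePts_cons_add {n x : ℕ} {w : Fin n → ℕ} (hx : 0 < x)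
    (hw : ∀ i, 0 < w i) (d : ℕ) :
    (posLatticePts (Fin.cons x w : Fin (n + 1) → ℕ) (d + x)).ncard =
      (posLatticePts w d).ncard + (posLatticePts (Fin.cons x w : Fin (n + 1) → ℕ) d).ncard := by
  have hxw : ∀ i, 0 < (Fin.cons x w : Fin (n + 1) → ℕ) i := Fin.forall_fin_succ.2 ⟨hx, hw⟩
  have hdisj : Disjoint (Fin.cons 1 '' posLatticePts w d)
      ((· + Pi.single 0 1) '' posLatticePts (Fin.cons x w : Fin (n + 1) → ℕ) d) := by
    refine Set.disjoint_left.2 ?_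
    rintro _ ⟨v, -, rfl⟩ ⟨v', hv', h⟩
    have h0 := congrFun h 0
    have := hv'.1 0
    simp only [Pi.add_apply, Pi.single_eq_same, Fin.cons_zero, add_eq_right] at h0
    omega
  rw [posLatticePts_cons_add, Set.ncard_union_eq hdisj ((finite_posLatticePts hw d).image _)
    ((finite_posLatticePts hxw d).image _), Set.ncard_image_of_injective _ ?_,
    Set.ncard_image_of_injective _ (add_left_injective _)]
  exact Fin.cons_right_injective _

theorem ncard_posLatticePts_cons_add_mul {n x : ℕ} {w : Fin n → ℕ} (hx : 0 < x)
    (hw : ∀ i, 0 < w i) (d k : ℕ) :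
    (posLatticePts (Fin.cons x w : Fin (n + 1) → ℕ) (d + k * x)).ncard =
      (posLatticePts (Fin.cons x w : Fin (n + 1) → ℕ) d).ncard +
        ∑ j ∈ Finset.range k, (posLatticePts w (d + j * x)).ncard := by
  induction k with
  | zero => simp
  | succ k ih =>
    rw [add_mul, one_mul, ← add_assoc, ncard_posLatticePts_cons_add hx hw, ih,
      Finset.sum_range_succ]
    ring

end LatticePoints

section Popoviciu

variable {y z m : ℕ}

theorem mem_posLatticePts_pair {v : Fin 2 → ℤ} :
    v ∈ posLatticePts ![y, z] m ↔ (0 < v 0 ∧ 0 < v 1) ∧ v 0 * y + v 1 * z = m := by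
  simp [posLatticePts, Fin.forall_fin_two]

variable [NeZero y] [NeZero z]

theorem exists_mul_leastPosCoeff_add_eq (hyz : y.Coprime z) (hm : 0 < m) :
    ∃ q : ℕ, (leastPosCoeff y z m * y + leastPosCoeff z y m * z + q * (y * z) : ℤ) =
      m + y * z := by
  set B := leastPosCoeff y z m
  set C := leastPosCoeff z y m
  have hdvdz : (z : ℤ) ∣ m - (B * y + C * z) := by
    rw [← ZMod.intCast_zmod_eq_zero_iff_dvd]
    push_cast
    rw [leastPosCoeff_mul hyz, ZMod.natCast_self, mul_zero, add_zero, sub_self]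
  have hdvdy : (y : ℤ) ∣ m - (B * y + C * z) := by
    rw [← ZMod.intCast_zmod_eq_zero_iff_dvd]
    push_cast
    rw [leastPosCoeff_mul hyz.symm, ZMod.natCast_self, mul_zero, zero_add, sub_self]
  obtain ⟨q, hq⟩ := (Nat.isCoprime_iff_coprime.2 hyz).mul_dvd hdvdy hdvdz
  have hBy : B * y ≤ y * z := by
    rw [mul_comm y]
    exact Nat.mul_le_mul_right y (leastPosCoeff_le y (m : ZMod z))
  have hCz : C * z ≤ y * z := Nat.mul_le_mul_right z (leastPosCoeff_le z (m : ZMod y))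
  have hyz_pos : 0 < y * z := Nat.mul_pos (NeZero.pos y) (NeZero.pos z)
  zify at hBy hCz hyz_pos hm
  have hq_nonneg : 0 ≤ q + 1 := by
    by_contra! hneg
    nlinarith
  obtain ⟨Q, hQ⟩ := Int.eq_ofNat_of_zero_le hq_nonneg
  exact ⟨Q, by rw [← hQ]; linarith⟩

theorem posLatticePts_pair_eq_image (hyz : y.Coprime z) {q : ℕ}
    (hq : (leastPosCoeff y z m * y + leastPosCoeff z y m * z + q * (y * z) : ℤ) = m + y * z) :
    posLatticePts ![y, z] m =
      (fun j : ℕ => ![(leastPosCoeff y z m + j * z : ℤ), leastPosCoeff z y m + (q - 1 - j) * y]) ''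
        Finset.range q := by
  ext v
  rw [mem_posLatticePts_pair]
  constructor
  · rintro ⟨⟨hpos0, hpos1⟩, hsum⟩
    obtain ⟨j, hj⟩ := exists_eq_leastPosCoeff_add_mul hyz hpos0
    obtain ⟨l, hl⟩ := exists_eq_leastPosCoeff_add_mul hyz.symm hpos1
    have hresz : (v 0 * y : ZMod z) = m := by
      simpa using congrArg (Int.cast : ℤ → ZMod z) hsum
    have hresy : (v 1 * z : ZMod y) = m := by
      simpa using congrArg (Int.cast : ℤ → ZMod y) hsum
    rw [hresz] at hj
    rw [hresy] at hl
    have hyz_ne : (y * z : ℤ) ≠ 0 := by simp [NeZero.ne]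
    have hjl : (j + l + 1 : ℤ) = q := mul_right_cancel₀ hyz_ne (by
      rw [hj, hl] at hsum
      linarith)
    refine ⟨j, ?_, funext (Fin.forall_fin_two.2 ⟨hj.symm, ?_⟩)⟩
    · simp only [Finset.coe_range, Set.mem_Iio]
      omega
    · change _ + ((q : ℤ) - 1 - j) * y = v 1
      rw [hl, ← hjl]
      ring
  · rintro ⟨j, hj, rfl⟩
    have hj : (j : ℤ) + 1 ≤ q := mod_cast Finset.mem_range.1 hj
    have hB := leastPosCoeff_pos y (m : ZMod z)
    have hC := leastPosCoeff_pos z (m : ZMod y)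
    have hl : (0 : ℤ) ≤ (q - 1 - j) * y := mul_nonneg (by linarith) y.cast_nonneg
    simp only [Matrix.cons_val_zero, Matrix.cons_val_one]
    exact ⟨⟨by positivity, by positivity⟩, by linarith⟩

theorem ncard_posLatticePts_pair_of_eq (hyz : y.Coprime z) {q : ℕ}
    (hq : (leastPosCoeff y z m * y + leastPosCoeff z y m * z + q * (y * z) : ℤ) = m + y * z) :
    (posLatticePts ![y, z] m).ncard = q := by
  have hinj : Function.Injective fun j : ℕ =>
      ![(leastPosCoeff y z m + j * z : ℤ), leastPosCoeff z y m + (q - 1 - j) * y] := by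
    intro i j hij
    simpa [NeZero.ne] using congrFun hij 0
  rw [posLatticePts_pair_eq_image hyz hq, Set.ncard_image_of_injective _ hinj,
    Set.ncard_coe_finset, Finset.card_range]

theorem two_mul_ncard_posLatticePts_pair (hyz : y.Coprime z) (hm : 0 < m) :
    2 * (y * z) * ((posLatticePts ![y, z] m).ncard : ℤ) =
      2 * m - y - z - y * sawtooth y z m - z * sawtooth z y m := by
  obtain ⟨q, hq⟩ := exists_mul_leastPosCoeff_add_eq hyz hm
  rw [ncard_posLatticePts_pair_of_eq hyz hq, sawtooth, sawtooth]
  linarith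

end Popoviciu

section Genus

variable {x y z d k : ℕ}

theorem sum_range_two_mul_add_mul_sub (k : ℕ) (e x c : ℤ) :
    ∑ j ∈ Finset.range k, (2 * (e + j * x) - c) = k * (2 * e + (k - 1) * x - c) := by
  induction k with
  | zero => simp
  | succ k ih =>
    rw [Finset.sum_range_succ, ih]
    push_cast
    ring

theorem two_mul_ncard_posLatticePts_triple (hx : 0 < x) [NeZero y] [NeZero z] (hyz : y.Coprime z)
    {e : ℕ} (he : 0 < e) (hlt : e < x + y + z) (k : ℕ) :
    2 * (y * z) * ((posLatticePts ![x, y, z] (e + k * x)).ncard : ℤ) =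
      k * (2 * e + (k - 1) * x - (y + z)) -
        y * ∑ j ∈ Finset.range k, sawtooth y z (e + j * x) -
        z * ∑ j ∈ Finset.range k, sawtooth z y (e + j * x) := by
  have hempty : posLatticePts ![x, y, z] e = ∅ :=
    posLatticePts_eq_empty (by rwa [Fin.sum_univ_three])
  have hfiber : (posLatticePts ![x, y, z] (e + k * x)).ncard =
      (posLatticePts ![x, y, z] e).ncard +
        ∑ j ∈ Finset.range k, (posLatticePts ![y, z] (e + j * x)).ncard :=
    ncard_posLatticePts_cons_add_mul hx (Fin.forall_fin_two.2 ⟨NeZero.pos y, NeZero.pos z⟩) e k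
  rw [hfiber, hempty, Set.ncard_empty, zero_add, Nat.cast_sum,
    ← sum_range_two_mul_add_mul_sub, Finset.mul_sum, Finset.mul_sum, Finset.mul_sum,
    ← Finset.sum_sub_distrib, ← Finset.sum_sub_distrib]
  refine Finset.sum_congr rfl fun j _ => ?_
  rw [two_mul_ncard_posLatticePts_pair hyz (Nat.add_pos_left he _)]
  push_cast
  ring

theorem natCast_eq_genusOf (hx : 0 < x) (hy : 0 < y) (hz : 0 < z) {N : ℕ}
    (h : (2 * (x * y * z) * N : ℤ) = d * (d - x - y - z) + Nat.gcd x d * (y * z) +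
      Nat.gcd y d * (x * z) + Nat.gcd z d * (x * y) - x * y * z) :
    (N : ℚ) = genusOf x y z d := by
  have hq : (2 * (x * y * z) * N : ℚ) = d * (d - x - y - z) + Nat.gcd x d * (y * z) +
      Nat.gcd y d * (x * z) + Nat.gcd z d * (x * y) - x * y * z := by exact_mod_cast h
  rw [genusOf]
  field_simp
  linarith

theorem genusOf_right_comm (x y z d : ℕ) : genusOf x y z d = genusOf x z y d := by
  unfold genusOf
  ring

theorem ncard_posLatticePts_of_eq_mul (hx : 0 < x) [NeZero y] [NeZero z] (hxy : x.Coprime y)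
    (hxz : x.Coprime z) (hyz : y.Coprime z) (hd : d = (k + 1) * x)
    (hdy : (d : ZMod y) = 0 ∨ (d : ZMod y) = x ∨ (d : ZMod y) = z)
    (hdz : (d : ZMod z) = 0 ∨ (d : ZMod z) = x ∨ (d : ZMod z) = y) :
    ((posLatticePts ![x, y, z] d).ncard : ℚ) = genusOf x y z d := by
  have hsum_z := sum_sawtooth_natCast_mul hyz hxz k.succ_pos (by simp [hd]) hdz
  have hsum_y := sum_sawtooth_natCast_mul hyz.symm hxy k.succ_pos (by simp [hd]) hdy
  rw [sum_sawtooth_natCast_mul_succ hyz] at hsum_z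
  rw [sum_sawtooth_natCast_mul_succ hyz.symm] at hsum_y
  have hcount := two_mul_ncard_posLatticePts_triple hx hyz hx
    (by linarith [NeZero.pos y]) k
  rw [eq_sub_of_add_eq hsum_z, eq_sub_of_add_eq hsum_y, show x + k * x = d by linarith] at hcount
  refine natCast_eq_genusOf hx (NeZero.pos y) (NeZero.pos z) ?_
  have hdx : (d : ℤ) = (k + 1) * x := mod_cast hd
  rw [Nat.gcd_eq_left (hd ▸ dvd_mul_left x (k + 1))]
  linear_combination x * hcount + (y + z - d - k * x : ℤ) * hdx

theorem ncard_posLatticePts_of_eq_mul_add (hx : 0 < x) [NeZero y] [NeZero z] (hxy : x.Coprime y)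
    (hxz : x.Coprime z) (hyz : y.Coprime z) (hk : 0 < k) (hd : d = k * x + y)
    (hdy : (d : ZMod y) = 0 ∨ (d : ZMod y) = x ∨ (d : ZMod y) = z)
    (hdz : (d : ZMod z) = 0 ∨ (d : ZMod z) = x ∨ (d : ZMod z) = y) :
    ((posLatticePts ![x, y, z] d).ncard : ℚ) = genusOf x y z d := by
  have hsum_z := sum_sawtooth_self_add_natCast_mul hyz hxz hk (by simp [hd, add_comm]) hdz
  have hsum_y := sum_sawtooth_natCast_mul hyz.symm hxy hk (by simp [hd]) hdy
  have hcount := two_mul_ncard_posLatticePts_triple hx hyz (NeZero.pos y)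
    (by linarith [NeZero.pos z]) k
  simp only [ZMod.natCast_self, zero_add] at hcount
  rw [hsum_z, hsum_y, show y + k * x = d by linarith] at hcount
  refine natCast_eq_genusOf hx (NeZero.pos y) (NeZero.pos z) ?_
  have hdx : (d : ℤ) = k * x + y := mod_cast hd
  rw [gcd_eq_one_of_natCast_eq hxy.symm (show (d : ZMod x) = y by simp [hd])]
  linear_combination x * hcount + (x + z - d - k * x : ℤ) * hdx

end Genus

namespace IsGoodQuadruple

section Weights

variable {w : Fin 3 → ℕ} {d : ℕ}

theorem pos (h : IsGoodQuadruple (w 0) (w 1) (w 2) d) (i : Fin 3) : 0 < w i := by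
  fin_cases i
  exacts [h.1, h.2.1, h.2.2.1]

theorem degree_pos (h : IsGoodQuadruple (w 0) (w 1) (w 2) d) : 0 < d := h.2.2.2.1

theorem exists_eq_mul_add (h : IsGoodQuadruple (w 0) (w 1) (w 2) d) (i : Fin 3) :
    ∃ k j, 0 < k ∧ d = k * w i + w j := by
  obtain ⟨-, -, -, -, -, -, -, -, -, -, h0, h1, h2, -⟩ := h
  fin_cases i
  · simpa [Fin.exists_fin_succ, ← and_or_left] using h0
  · simpa [Fin.exists_fin_succ, ← and_or_left] using h1
  · simpa [Fin.exists_fin_succ, ← and_or_left] using h2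

theorem exists_sum_eq (h : IsGoodQuadruple (w 0) (w 1) (w 2) d) (i : Fin 3) :
    ∃ u : Fin 3 → ℕ, u i = 0 ∧ ∑ t, u t * w t = d := by
  obtain ⟨-, -, -, -, -, -, -, -, -, -, -, -, -, ⟨a0, b0, h0⟩, ⟨a1, b1, h1⟩, ⟨a2, b2, h2⟩⟩ := h
  fin_cases i
  · exact ⟨![0, a0, b0], by simp [Fin.sum_univ_three, h0]⟩
  · exact ⟨![a1, 0, b1], by simp [Fin.sum_univ_three, h1]⟩
  · exact ⟨![a2, b2, 0], by simp [Fin.sum_univ_three, h2]⟩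

end Weights

theorem ncard_posLatticePts {w0 w1 w2 d : ℕ} (h : IsGoodQuadruple w0 w1 w2 d) :
    ((posLatticePts ![w0, w1, w2] d).ncard : ℚ) = genusOf w0 w1 w2 d := by
  have hres1 : (d : ZMod w1) = 0 ∨ (d : ZMod w1) = w0 ∨ (d : ZMod w1) = w2 := by
    obtain ⟨k, j, -, hd⟩ := exists_eq_mul_add (w := ![w0, w1, w2]) h 1
    fin_cases j <;> simp [hd]
  have hres2 : (d : ZMod w2) = 0 ∨ (d : ZMod w2) = w0 ∨ (d : ZMod w2) = w1 := by
    obtain ⟨k, j, -, hd⟩ := exists_eq_mul_add (w := ![w0, w1, w2]) h 2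
    fin_cases j <;> simp [hd]
  obtain ⟨k, j, hk, hd⟩ := exists_eq_mul_add (w := ![w0, w1, w2]) h 0
  obtain ⟨h0, h1, h2, -, h01, h02, h12, -⟩ := h
  have : NeZero w1 := ⟨h1.ne'⟩
  have : NeZero w2 := ⟨h2.ne'⟩
  match j with
  | 0 => exact ncard_posLatticePts_of_eq_mul h0 h01 h02 h12 (hd.trans (by simp; ring)) hres1 hres2
  | 1 => exact ncard_posLatticePts_of_eq_mul_add h0 h01 h02 h12 hk hd hres1 hres2
  | 2 =>
    have hswap : ![w0, w2, w1] = ![w0, w1, w2] ∘ Equiv.swap 1 2 := by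
      ext i
      fin_cases i <;> rfl
    rw [genusOf_right_comm, ← ncard_posLatticePts_comp_perm (Equiv.swap 1 2), ← hswap]
    exact ncard_posLatticePts_of_eq_mul_add h0 h02 h01 h12.symm hk hd hres2 hres1

end IsGoodQuadruple

section IntrinsicInterior

theorem pos_of_mem_intrinsicInterior {E : Type*} [AddCommGroup E] [Module ℝ E]
    [TopologicalSpace E] [IsTopologicalAddGroup E] [ContinuousSMul ℝ E] {s : Set E} {u v : E}
    (f : E →ₗ[ℝ] ℝ) (hf : ∀ y ∈ s, 0 ≤ f y) (hu : u ∈ s) (hfu : 0 < f u)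
    (hv : v ∈ intrinsicInterior ℝ s) : 0 < f v := by
  obtain ⟨p, hp, rfl⟩ := hv
  let γ : ℝ → affineSpan ℝ s := fun t =>
    ⟨AffineMap.lineMap (p : E) u t, AffineMap.lineMap_mem t p.2 (subset_affineSpan ℝ s hu)⟩
  have hγ : Continuous γ := AffineMap.lineMap_continuous.subtype_mk _
  have hnhds : ∀ᶠ t in nhds 0, γ t ∈ interior ((↑) ⁻¹' s) :=
    (isOpen_interior.preimage hγ).mem_nhds (by simpa [γ] using hp)
  obtain ⟨t, hts, ht : t < 0⟩ := ((hnhds.filter_mono nhdsWithin_le_nhds).and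
    (self_mem_nhdsWithin : Set.Iio (0 : ℝ) ∈ nhdsWithin 0 (Set.Iio 0))).exists
  have hγs : γ t ∈ ((↑) ⁻¹' s : Set (affineSpan ℝ s)) := interior_subset hts
  have hline : f (γ t) = f p + t * (f u - f p) := by
    simp only [γ, AffineMap.lineMap_apply, vsub_eq_sub, vadd_eq_add, map_add, map_smul, map_sub,
      smul_eq_mul, add_comm]
  have := hline ▸ hf _ hγs
  by_contra! hle
  nlinarith

variable {E : Type*} [NormedAddCommGroup E] [NormedSpace ℝ E] {s : Set E}

theorem image_add_interior_eq_intrinsicInterior {v : E} (hv : v ∈ affineSpan ℝ s) :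
    (fun x : (affineSpan ℝ s).direction => (x + v : E)) ''
      interior {x : (affineSpan ℝ s).direction | (x + v : E) ∈ s} = intrinsicInterior ℝ s := by
  have : Nonempty (affineSpan ℝ s) := ⟨⟨v, hv⟩⟩
  let e := (AffineIsometryEquiv.vaddConst ℝ (⟨v, hv⟩ : affineSpan ℝ s)).toHomeomorph
  have hinterior : interior {x : (affineSpan ℝ s).direction | (x + v : E) ∈ s} =
      e ⁻¹' interior ((↑) ⁻¹' s) := (e.preimage_interior (Subtype.val ⁻¹' s)).symm
  calc
    _ = (fun x => (e x : E)) '' (e ⁻¹' interior ((↑) ⁻¹' s)) := by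
      rw [hinterior]
      rfl
    _ = (↑) '' (e '' (e ⁻¹' interior ((↑) ⁻¹' s))) := (Set.image_image _ _ _).symm
    _ = intrinsicInterior ℝ s := by
      rw [Set.image_preimage_eq _ e.surjective, intrinsicInterior]

theorem mem_intrinsicInterior_of_forall_eq [FiniteDimensional ℝ E] {v : E} (hs : Convex ℝ s)
    (hv : v ∈ s) (h : ∀ f : E →ₗ[ℝ] ℝ, (∀ y ∈ s, f y ≤ f v) → ∀ y ∈ s, f y = f v) :
    v ∈ intrinsicInterior ℝ s := by
  have himage := image_add_interior_eq_intrinsicInterior (subset_affineSpan ℝ s hv)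
  set T := {x : (affineSpan ℝ s).direction | (x + v : E) ∈ s}
  have hT : Convex ℝ T :=
    (hs.translate_preimage_left v).linear_preimage (affineSpan ℝ s).direction.subtype
  have hTne : (interior T).Nonempty :=
    Set.image_nonempty.1 (himage ▸ Set.Nonempty.intrinsicInterior hs ⟨v, hv⟩)
  suffices h0 : 0 ∈ interior T from himage ▸ ⟨0, h0, zero_add v⟩
  by_contra h0
  obtain ⟨f, hf, hmax⟩ := geometric_hahn_banach_of_nonempty_interior_point hT h0 hTne
  obtain ⟨F, hF⟩ := LinearMap.exists_extend (f : (affineSpan ℝ s).direction →ₗ[ℝ] ℝ)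
  have hFf (x : (affineSpan ℝ s).direction) : F x = f x := LinearMap.congr_fun hF x
  have hFmax (y : E) (hy : y ∈ s) : F y ≤ F v := by
    have hdir : y - v ∈ (affineSpan ℝ s).direction :=
      AffineSubspace.vsub_mem_direction (subset_affineSpan ℝ s hy) (subset_affineSpan ℝ s hv)
    have hle := hmax ⟨y - v, hdir⟩ (by simpa [T] using hy)
    rw [map_zero, ← hFf, map_sub] at hle
    exact sub_nonpos.1 hle
  have hker : (affineSpan ℝ s).direction ≤ LinearMap.ker F := by
    rw [direction_affineSpan, vectorSpan_eq_span_vsub_set_right ℝ hv, Submodule.span_le]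
    rintro _ ⟨y, hy, rfl⟩
    simp [h F hFmax y hy]
  exact hf (ContinuousLinearMap.ext fun x => by rw [← hFf]; exact hker x.2)

end IntrinsicInterior

section Polytope

variable {w : Fin 3 → ℕ} {d : ℕ}

theorem mem_latticePts_iff {v : Fin 3 → ℤ} :
    v ∈ latticePts (w 0) (w 1) (w 2) d ↔ (∀ i, 0 ≤ v i) ∧ ∑ i, v i * w i = d := by
  rw [Fin.sum_univ_three]
  rfl

theorem natCast_mem_latticePts {u : Fin 3 → ℕ} (hu : ∑ i, u i * w i = d) :
    (fun i => (u i : ℤ)) ∈ latticePts (w 0) (w 1) (w 2) d :=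
  mem_latticePts_iff.2 ⟨fun i => Int.natCast_nonneg (u i), mod_cast hu⟩

theorem toR3_mem_polytopeOf {v : Fin 3 → ℤ} (hv : v ∈ latticePts (w 0) (w 1) (w 2) d) :
    toR3 v ∈ polytopeOf (w 0) (w 1) (w 2) d :=
  subset_convexHull ℝ _ (Set.mem_image_of_mem toR3 hv)

theorem sum_toR3_mul_eq_iff {v : Fin 3 → ℤ} :
    ∑ i, toR3 v i * w i = d ↔ ∑ i, v i * w i = d := by
  unfold toR3
  exact_mod_cast Iff.rfl

theorem polytopeOf_subset (w : Fin 3 → ℕ) (d : ℕ) :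
    polytopeOf (w 0) (w 1) (w 2) d ⊆
      {y | 0 ≤ y} ∩ {y | ∑ i, y i * w i = d} := by
  refine convexHull_min ?_
    ((convex_Ici 0).inter (convex_hyperplane ⟨fun y z => ?_, fun c y => ?_⟩ _))
  · rintro _ ⟨v, hv, rfl⟩
    obtain ⟨hnonneg, hsum⟩ := mem_latticePts_iff.1 hv
    exact ⟨fun i => Int.cast_nonneg (hnonneg i), sum_toR3_mul_eq_iff.2 hsum⟩
  · simp only [Pi.add_apply, add_mul, Finset.sum_add_distrib]
  · simp only [Pi.smul_apply, smul_eq_mul, mul_assoc, Finset.mul_sum]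

theorem sum_univ_eq_of_ne {M : Type*} [AddCommMonoid M] {i j l : Fin 3} (hij : i ≠ j)
    (hil : i ≠ l) (hjl : j ≠ l) (f : Fin 3 → M) : ∑ t, f t = f i + f j + f l := by
  have huniv : (Finset.univ : Finset (Fin 3)) = {i, j, l} := by
    revert i j l
    decide
  rw [huniv, Finset.sum_insert (by simp [hij, hil]), Finset.sum_pair hjl, add_assoc]

theorem pos_of_mul_add_nonpos {i j l : Fin 3} (hij : i ≠ j) (hil : i ≠ l) (hjl : j ≠ l)
    (hw : 0 < w l) {k : ℕ} {v : Fin 3 → ℤ} (hv : v ∈ posLatticePts w (k * w i + w j))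
    {F : Fin 3 → ℝ} (hvF : ∑ t, v t * F t = 0) (hi : 0 < F i) (hkij : k * F i + F j ≤ 0) :
    0 < F l := by
  obtain ⟨hpos, hvw⟩ := hv
  rw [sum_univ_eq_of_ne hij hil hjl] at hvw hvF
  push_cast at hvw
  have hvi : v i < k := by
    have hwl : (0 : ℤ) < w l := mod_cast hw
    nlinarith [hpos j, mul_pos (hpos l) hwl]
  have hviF : v i * F i < k * F i := mul_lt_mul_of_pos_right (mod_cast hvi) hi
  have hvjF : v j * F j ≤ -(k * F i) := calc
    v j * F j ≤ 1 * F j := mul_le_mul_of_nonpos_right (mod_cast hpos j) (by nlinarith)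
    _ ≤ -(k * F i) := by linarith
  have hvl : (0 : ℝ) < v l := mod_cast hpos l
  exact pos_of_mul_pos_right (by linarith) hvl.le

theorem sum_single_add_single_mul {R ι : Type*} [Semiring R] [Fintype ι] [DecidableEq ι]
    (i j : ι) (a b : R) (f : ι → R) :
    ∑ t, (Pi.single i a + Pi.single j b : ι → R) t * f t = a * f i + b * f j := by
  simp [add_mul, Finset.sum_add_distrib, Pi.single_apply]

end Polytope

namespace IsGoodQuadruple

variable {w : Fin 3 → ℕ} {d : ℕ} (h : IsGoodQuadruple (w 0) (w 1) (w 2) d)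

include h

theorem exists_sum_single_add_single_mul_eq (i : Fin 3) :
    ∃ k j, 0 < k ∧ ∑ t, (Pi.single i k + Pi.single j 1 : Fin 3 → ℕ) t * w t = d := by
  obtain ⟨k, j, hk, hd⟩ := h.exists_eq_mul_add i
  exact ⟨k, j, hk, by rw [sum_single_add_single_mul, one_mul, hd]⟩

theorem exists_sum_pos {j : Fin 3} {F : Fin 3 → ℝ} (hF : ∀ t, t ≠ j → 0 < F t) :
    ∃ u : Fin 3 → ℕ, ∑ t, u t * w t = d ∧ 0 < ∑ t, u t * F t := by
  obtain ⟨u, huj, hud⟩ := h.exists_sum_eq j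
  obtain ⟨i, -, hi⟩ := Finset.exists_ne_zero_of_sum_ne_zero (hud.trans_ne h.degree_pos.ne')
  have hui : u i ≠ 0 := left_ne_zero_of_mul hi
  have hij : i ≠ j := fun hij => hui (hij ▸ huj)
  refine ⟨u, hud, Finset.sum_pos' (fun t _ => ?_) ⟨i, Finset.mem_univ i, ?_⟩⟩
  · rcases eq_or_ne t j with rfl | htj
    · simp [huj]
    · exact mul_nonneg (u t).cast_nonneg (hF t htj).le
  · exact mul_pos (by positivity) (hF i hij)

theorem nonpos_of_forall_sum_nonpos {v : Fin 3 → ℤ} (hv : v ∈ posLatticePts w d)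
    {F : Fin 3 → ℝ} (hvF : ∑ t, v t * F t = 0)
    (hF : ∀ u : Fin 3 → ℕ, ∑ t, u t * w t = d → ∑ t, u t * F t ≤ 0) (i : Fin 3) : F i ≤ 0 := by
  -- Otherwise the lattice point `k • eᵢ + eⱼ` forces `F j < 0` if `j ≠ i`, hence `F l > 0` for the
  -- third index `l`, so a lattice point on the edge `u j = 0` makes the functional positive.
  by_contra! hi
  obtain ⟨k, j, -, hd⟩ := h.exists_sum_single_add_single_mul_eq i
  have hij : k * F i + F j ≤ 0 := by
    have := hF _ hd
    simpa [add_mul, Finset.sum_add_distrib, Pi.single_apply] using this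
  rw [sum_single_add_single_mul, one_mul] at hd
  obtain ⟨u, hud, hu⟩ := h.exists_sum_pos (j := j) (F := F) fun l hlj => by
    rcases eq_or_ne l i with rfl | hli
    · exact hi
    rcases eq_or_ne i j with rfl | hne
    · nlinarith
    · exact pos_of_mul_add_nonpos hne hli.symm hlj.symm (h.pos l) (hd ▸ hv) hvF hi hij
  exact hu.not_ge (hF u hud)

theorem eq_zero_of_forall_sum_nonpos {v : Fin 3 → ℤ} (hv : v ∈ posLatticePts w d)
    {F : Fin 3 → ℝ} (hvF : ∑ t, v t * F t = 0)
    (hF : ∀ u : Fin 3 → ℕ, ∑ t, u t * w t = d → ∑ t, u t * F t ≤ 0) : F = 0 := by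
  have hpos (i : Fin 3) : (0 : ℝ) < v i := mod_cast hv.1 i
  have hterm := (Finset.sum_eq_zero_iff_of_nonpos fun i _ => mul_nonpos_of_nonneg_of_nonpos
    (hpos i).le (h.nonpos_of_forall_sum_nonpos hv hvF hF i)).1 hvF
  exact funext fun i => (mul_eq_zero_iff_left (hpos i).ne').1 (hterm i (Finset.mem_univ i))

theorem toR3_mem_intrinsicInterior {v : Fin 3 → ℤ} (hv : v ∈ posLatticePts w d) :
    toR3 v ∈ intrinsicInterior ℝ (polytopeOf (w 0) (w 1) (w 2) d) := by
  have hmem := toR3_mem_polytopeOf (mem_latticePts_iff.2 ⟨fun i => (hv.1 i).le, hv.2⟩)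
  -- Subtracting a multiple of the weight functional, we may assume that `f` vanishes at `v`.
  refine mem_intrinsicInterior_of_forall_eq (convex_convexHull ℝ _) hmem fun f hf => ?_
  let F : Fin 3 → ℝ := fun i => f (Pi.single i 1) - f (toR3 v) / d * w i
  have hd : (d : ℝ) ≠ 0 := Nat.cast_ne_zero.2 h.degree_pos.ne'
  have hsum (y : Fin 3 → ℝ) (hy : ∑ i, y i * w i = d) : ∑ i, y i * F i = f y - f (toR3 v) := by
    have hfy : ∑ i, y i * f (Pi.single i 1) = f y := by
      conv_rhs => rw [pi_eq_sum_univ' y, map_sum]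
      simp only [map_smul, smul_eq_mul]
    have hvy : ∑ i, y i * (f (toR3 v) / d * w i) = f (toR3 v) := by
      rw [← Finset.sum_congr rfl fun i _ => mul_left_comm _ (y i) _, ← Finset.mul_sum, hy,
        div_mul_cancel₀ _ hd]
    simp only [F, mul_sub, Finset.sum_sub_distrib, hfy, hvy]
  have hF : F = 0 := h.eq_zero_of_forall_sum_nonpos hv (by
    rw [← sub_self (f (toR3 v)), ← hsum _ (sum_toR3_mul_eq_iff.2 hv.2)]
    rfl) fun u hu => by
      have hmem_u := toR3_mem_polytopeOf (natCast_mem_latticePts hu)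
      have hle := hf _ hmem_u
      rw [← sub_nonpos, ← hsum _ (polytopeOf_subset w d hmem_u).2] at hle
      exact_mod_cast hle
  intro y hy
  rw [← sub_eq_zero, ← hsum y (polytopeOf_subset w d hy).2, hF]
  simp

theorem toR3_mem_intrinsicInterior_iff {v : Fin 3 → ℤ} :
    toR3 v ∈ intrinsicInterior ℝ (polytopeOf (w 0) (w 1) (w 2) d) ↔ v ∈ posLatticePts w d := by
  refine ⟨fun hv => ⟨fun i => ?_, ?_⟩, h.toR3_mem_intrinsicInterior⟩
  · obtain ⟨k, j, hk, hd⟩ := h.exists_sum_single_add_single_mul_eq i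
    have hpos := pos_of_mem_intrinsicInterior (LinearMap.proj i)
      (fun y hy => (polytopeOf_subset w d hy).1 i)
      (toR3_mem_polytopeOf (natCast_mem_latticePts hd)) (by
        simp only [toR3, Pi.add_apply, Pi.single_eq_same, LinearMap.proj_apply, Int.cast_natCast]
        exact_mod_cast Nat.add_pos_left hk _) hv
    exact Int.cast_pos.1 hpos
  · exact sum_toR3_mul_eq_iff.1 (polytopeOf_subset w d (intrinsicInterior_subset hv)).2

end IsGoodQuadruple

theorem card_intrinsicInterior_latticePts_general (w0 w1 w2 d : ℕ)
    (h : IsGoodQuadruple w0 w1 w2 d) :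
    ({v : Fin 3 → ℤ | toR3 v ∈ intrinsicInterior ℝ (polytopeOf w0 w1 w2 d)}.ncard : ℚ) =
      genusOf w0 w1 w2 d := by
  rw [← h.ncard_posLatticePts]
  congr 2
  exact Set.ext fun v => IsGoodQuadruple.toR3_mem_intrinsicInterior_iff (w := ![w0, w1, w2]) h

/-- For a `g`-good quadruple, the number of lattice points in the relative (intrinsic)
interior of the associated polytope equals `g`. -/
theorem card_intrinsicInterior_latticePts (g w0 w1 w2 d : ℕ) (hg : 1 ≤ g)
    (h : IsGGoodQuadruple g w0 w1 w2 d) :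
    {v : Fin 3 → ℤ | toR3 v ∈ intrinsicInterior ℝ (polytopeOf w0 w1 w2 d)}.ncard = g := by
  exact_mod_cast (card_intrinsicInterior_latticePts_general w0 w1 w2 d h.1).trans h.2
end

section
/- Let g ≥ 1 be an integer and let (w₀, w₁, w₂, d) be a g-good quadruple. Then the number of triples (a,b,c) ∈ ℤ³₍≥0₎ with a·w₀ + b·w₁ + c·w₂ = d − w₀ − w₁ − w₂ equals g. -/
/-! An error term that is invariant under adding either of two coprime weights is constant, so a
count of representations equals any function with the same increments and the same value at `0`.
For two weights this gives Popoviciu's formula: a linear term plus one sawtooth value for each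
weight. For three weights the same argument applied to Popoviciu's formula gives a quadratic term
plus, for each weight `m`, a convolution of two sawtooths on `ℤ/m`. Fletcher's conditions force
`n = d - w₀ - w₁ - w₂` to be congruent to `-u`, `-v` or `-u - v` modulo each weight, `u` and `v`
being the other two weights, and there the convolution collapses to a `gcd` term of the genus. -/

namespace WeightedPlaneCurve

/-! ### Sawtooth functions on `ZMod m` -/

section Sawtooth

variable {m : ℕ}

/-- The sawtooth function on `ZMod m`, normalized to have mean zero: the residue `a`, taken in
`{0, …, m - 1}`, is sent to `(a - (m - 1) / 2) / m`. -/
def sawtooth (a : ZMod m) : ℚ := (2 * a.val + 1 - m) / (2 * m)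

theorem sawtooth_zero : sawtooth (0 : ZMod m) = (1 - m) / (2 * m) := by
  simp [sawtooth]

variable [NeZero m]

theorem sawtooth_neg_one_sub (a : ZMod m) : sawtooth (-1 - a) = -sawtooth a := by
  obtain ⟨k, rfl⟩ := Nat.exists_eq_succ_of_ne_zero (NeZero.ne m)
  have ha : a.val ≤ k := Nat.lt_succ_iff.mp a.val_lt
  have hval : (-1 - a).val = k - a.val := by
    rw [ZMod.val_sub (by rwa [ZMod.val_neg_one]), ZMod.val_neg_one]
  rw [sawtooth, sawtooth, hval]
  push_cast [ha]
  ring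

theorem sawtooth_sub_sawtooth_sub_one (a : ZMod m) :
    sawtooth a - sawtooth (a - 1) = 1 / m - if a = 0 then 1 else 0 := by
  have hm : (m : ℚ) ≠ 0 := NeZero.ne _
  split_ifs with ha
  · have h : sawtooth (a - 1) = -sawtooth a := by simpa [ha] using sawtooth_neg_one_sub (0 : ZMod m)
    rw [h, ha, sawtooth_zero]
    field_simp
    ring
  · have hpos : 1 ≤ a.val := Nat.one_le_iff_ne_zero.mpr ((ZMod.val_eq_zero a).not.mpr ha)
    have hval : (a - 1).val = a.val - 1 := by
      have : Fact (1 < m) := ⟨by have := a.val_lt; omega⟩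
      rw [ZMod.val_sub (by rwa [ZMod.val_one]), ZMod.val_one]
    rw [sawtooth, sawtooth, hval]
    push_cast [hpos]
    field_simp
    ring

theorem sum_sawtooth : ∑ a : ZMod m, sawtooth a = 0 := by
  have h : ∑ a : ZMod m, sawtooth a = -∑ a : ZMod m, sawtooth a := by
    rw [← Finset.sum_neg_distrib, ← (Equiv.subLeft (-1 : ZMod m)).sum_comp]
    simp only [Equiv.subLeft_apply, sawtooth_neg_one_sub]
  linarith

/-- The convolution of two sawtooths with steps `u` and `v`: for units `u` and `v` it is the sum of
`sawtooth a * sawtooth b` over the pairs of residues with `u * a + v * b = n`. -/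
def sawtoothConv (u v n : ZMod m) : ℚ :=
  ∑ a : ZMod m, sawtooth a * sawtooth (v⁻¹ * (n - u * a))

variable {u v : ZMod m}

theorem sawtoothConv_comm (hu : IsUnit u) (hv : IsUnit v) (n : ZMod m) :
    sawtoothConv u v n = sawtoothConv v u n := by
  lift u to (ZMod m)ˣ using hu
  lift v to (ZMod m)ˣ using hv
  simp only [sawtoothConv, ZMod.inv_coe_unit]
  refine Fintype.sum_equiv (u.mulLeft.trans ((Equiv.subLeft n).trans v⁻¹.mulLeft)) _ _ fun a ↦ ?_
  simp [mul_comm (sawtooth a)]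

theorem sawtoothConv_sub_sawtoothConv_sub_left (hu : IsUnit u) (hv : IsUnit v) (n : ZMod m) :
    sawtoothConv u v n - sawtoothConv u v (n - u) = -sawtooth (v⁻¹ * n) := by
  lift u to (ZMod m)ˣ using hu
  lift v to (ZMod m)ˣ using hv
  have hshift : sawtoothConv (u : ZMod m) v (n - u) =
      ∑ a : ZMod m, sawtooth (a - 1) * sawtooth ((v : ZMod m)⁻¹ * (n - (u : ZMod m) * a)) :=
    Fintype.sum_equiv (Equiv.addRight 1) _ _ fun a ↦ by
      rw [Equiv.coe_addRight, add_sub_cancel_right, mul_add, mul_one, add_comm, sub_add_eq_sub_sub]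
  have hsum : ∑ a : ZMod m, sawtooth ((v : ZMod m)⁻¹ * (n - (u : ZMod m) * a)) = 0 := by
    rw [← sum_sawtooth (m := m), ZMod.inv_coe_unit]
    exact (u.mulLeft.trans ((Equiv.subLeft n).trans v⁻¹.mulLeft)).sum_comp sawtooth
  rw [hshift, sawtoothConv, ← Finset.sum_sub_distrib]
  simp_rw [← sub_mul, sawtooth_sub_sawtooth_sub_one, sub_mul (1 / (m : ℚ))]
  rw [Finset.sum_sub_distrib, ← Finset.mul_sum, hsum]
  simp

theorem sawtoothConv_sub_sawtoothConv_sub_right (hu : IsUnit u) (hv : IsUnit v) (n : ZMod m) :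
    sawtoothConv u v n - sawtoothConv u v (n - v) = -sawtooth (u⁻¹ * n) := by
  simp only [sawtoothConv_comm hu hv, sawtoothConv_sub_sawtoothConv_sub_left hv hu]

theorem sawtoothConv_neg_left (hu : IsUnit u) (hv : IsUnit v) :
    sawtoothConv u v (-u) - sawtoothConv u v 0 = sawtooth (0 : ZMod m) := by
  have h := sawtoothConv_sub_sawtoothConv_sub_left hu hv 0
  rw [zero_sub, mul_zero] at h
  linarith

theorem sawtoothConv_neg_right (hu : IsUnit u) (hv : IsUnit v) :
    sawtoothConv u v (-v) - sawtoothConv u v 0 = sawtooth (0 : ZMod m) := by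
  simp only [sawtoothConv_comm hu hv, sawtoothConv_neg_left hv hu]

theorem sawtoothConv_neg_sub (hu : IsUnit u) (hv : IsUnit v) :
    sawtoothConv u v (-u - v) = sawtoothConv u v 0 := by
  have hleft := sawtoothConv_neg_left hu hv
  have hright := sawtoothConv_sub_sawtoothConv_sub_right hu hv (-u)
  have hneg : sawtooth (u⁻¹ * -u) = -sawtooth (0 : ZMod m) := by
    rw [mul_neg, ZMod.inv_mul_of_unit u hu, ← sawtooth_neg_one_sub, sub_zero]
  linarith

theorem sawtoothConv_sub_eq_gcd {u v d : ℕ} (hu : u.Coprime m) (hv : v.Coprime m)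
    (hd : d ≡ m [MOD m] ∨ d ≡ u [MOD m] ∨ d ≡ v [MOD m]) :
    sawtoothConv (u : ZMod m) v (d - u - v) - sawtoothConv (u : ZMod m) v 0 =
      ((m.gcd d : ℚ) / m - 1) / 2 := by
  have hm : (m : ℚ) ≠ 0 := NeZero.ne _
  have hu' : IsUnit (u : ZMod m) := (ZMod.isUnit_iff_coprime u m).mpr hu
  have hv' : IsUnit (v : ZMod m) := (ZMod.isUnit_iff_coprime v m).mpr hv
  have hzero : sawtooth (0 : ZMod m) = (((1 : ℕ) : ℚ) / m - 1) / 2 := by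
    rw [sawtooth_zero]
    field_simp
    simp
  rcases hd with h | h | h <;>
    rw [(ZMod.natCast_eq_natCast_iff _ _ _).mpr h, Nat.gcd_comm, h.gcd_eq]
  · simp [sawtoothConv_neg_sub hu' hv', hm]
  · rw [hu, sub_self, zero_sub, sawtoothConv_neg_right hu' hv', hzero]
  · rw [hv, sub_right_comm, sub_self, zero_sub, sawtoothConv_neg_left hu' hv', hzero]

end Sawtooth

/-! ### Functions with prescribed increments -/

section Increments

theorem apply_add_nat_mul_eq {α : Type*} {f : ℤ → α} {B : ℤ} {u : ℕ}
    (hf : ∀ n, B < n → f (n + u) = f n) {n : ℤ} (hn : B < n) (k : ℕ) : f (n + k * u) = f n := by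
  induction k with
  | zero => simp
  | succ k ih =>
    rw [← ih, ← hf (n + k * u) (by nlinarith)]
    push_cast
    ring_nf

theorem eq_of_apply_add_eq {α : Type*} {f : ℤ → α} {B : ℤ} {u v : ℕ} (huv : u.Coprime v)
    (hu : ∀ n, B < n → f (n + u) = f n) (hv : ∀ n, B < n → f (n + v) = f n)
    {m n : ℤ} (hm : B < m) (hn : B < n) : f m = f n := by
  have hadd {n : ℤ} (hn : B < n) (a b : ℕ) : f (n + a * u + b * v) = f n := by
    rw [apply_add_nat_mul_eq hv (by nlinarith), apply_add_nat_mul_eq hu hn]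
  obtain ⟨x, y, hxy⟩ : ∃ x y : ℤ, m - n = x * u + y * v := by
    obtain ⟨a, b, hab⟩ := Nat.isCoprime_iff_coprime.mpr huv
    exact ⟨(m - n) * a, (m - n) * b, by linear_combination (n - m) * hab⟩
  rw [← hadd hm x.natAbs y.natAbs, ← hadd hn (x + x.natAbs).toNat (y + y.natAbs).toNat,
    Int.toNat_of_nonneg (by omega), Int.toNat_of_nonneg (by omega)]
  congr 1
  linear_combination hxy

theorem eq_of_increments_eq {α : Type*} [AddCommGroup α] {f g : ℤ → α} {B : ℤ} {u v : ℕ}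
    (huv : u.Coprime v) (hu : ∀ n, B < n → f (n + u) - f n = g (n + u) - g n)
    (hv : ∀ n, B < n → f (n + v) - f n = g (n + v) - g n)
    {m n : ℤ} (hm : B < m) (hfg : f m = g m) (hn : B < n) : f n = g n := by
  have h : (f - g) n = (f - g) m :=
    eq_of_apply_add_eq (f := f - g) huv (fun k hk ↦ sub_eq_sub_iff_sub_eq_sub.mpr (hu k hk))
      (fun k hk ↦ sub_eq_sub_iff_sub_eq_sub.mpr (hv k hk)) hn hm
  simpa [hfg, sub_eq_zero] using h

end Increments

/-! ### Denumerants -/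

section Denumerant

variable {ι : Type*} (w : ι → ℕ)

/-- The representations of `n` as a sum of weights `w i` with `i ∈ s`, encoded by the finitely
supported function of their multiplicities. -/
def representations (s : Finset ι) (n : ℤ) : Set (ι →₀ ℕ) :=
  {x | x.support ⊆ s ∧ (Finsupp.weight w x : ℤ) = n}

/-- Sylvester's denumerant: the number of representations of `n` by the weights `w i`, `i ∈ s`.
A zero weight makes the set of representations empty or infinite, with junk value `0`. -/
noncomputable def denumerant (s : Finset ι) (n : ℤ) : ℕ := (representations w s n).ncard

theorem representations_eq_union [DecidableEq ι] {s : Finset ι} {i : ι} (hi : i ∈ s) (n : ℤ) :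
    representations w s n = (representations w s (n - w i)).image (· + Finsupp.single i 1) ∪
      representations w (s.erase i) n := by
  ext x
  constructor
  · rintro ⟨hs, hx⟩
    rcases eq_or_ne (x i) 0 with h | h
    · exact .inr ⟨Finset.subset_erase.mpr ⟨hs, Finsupp.notMem_support_iff.mpr h⟩, hx⟩
    · refine .inl ⟨x - Finsupp.single i 1, ⟨Finsupp.support_tsub.trans hs, ?_⟩,
        tsub_add_cancel_of_le (Finsupp.single_le_iff.mpr (Nat.one_le_iff_ne_zero.mpr h))⟩
      have := Finsupp.weight_sub_single_add (w := w) h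
      omega
  · rintro (⟨y, ⟨hs, hy⟩, rfl⟩ | ⟨hs, hx⟩)
    · refine ⟨Finsupp.support_add.trans (Finset.union_subset hs ?_), ?_⟩
      · exact Finsupp.support_single_subset.trans (Finset.singleton_subset_iff.mpr hi)
      · rw [map_add, Finsupp.weight_single, one_smul]
        push_cast
        omega
    · exact ⟨hs.trans (Finset.erase_subset _ _), hx⟩

variable [∀ i, NeZero (w i)]

theorem finite_representations (s : Finset ι) (n : ℤ) : (representations w s n).Finite := by
  refine (s.finsupp fun _ ↦ Finset.range (n.toNat + 1)).finite_toSet.subset ?_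
  rintro x ⟨hs, hx⟩
  refine Finset.mem_finsupp_iff.mpr ⟨hs, fun i _ ↦ Finset.mem_range.mpr ?_⟩
  have := Finsupp.le_weight w (NeZero.ne (w i)) x
  omega

theorem representations_zero (s : Finset ι) : representations w s 0 = {0} := by
  ext x
  refine ⟨fun ⟨_, hx⟩ ↦ Finsupp.ext fun i ↦ ?_, ?_⟩
  · have := Finsupp.le_weight w (NeZero.ne (w i)) x
    simp only [Finsupp.coe_zero, Pi.zero_apply]
    omega
  · rintro rfl
    simp [representations]

theorem denumerant_zero (s : Finset ι) : denumerant w s 0 = 1 := by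
  rw [denumerant, representations_zero, Set.ncard_singleton]

theorem denumerant_singleton {j : ι} {n : ℤ} (hn : -(w j : ℤ) < n) :
    denumerant w {j} n = if (w j : ℤ) ∣ n then 1 else 0 := by
  have hw : 0 < w j := NeZero.pos _
  split_ifs with hdvd
  · obtain ⟨c, rfl⟩ := hdvd
    lift c to ℕ using by nlinarith
    refine Set.ncard_eq_one.mpr ⟨Finsupp.single j c, Set.ext fun x ↦ ⟨fun ⟨hs, hx⟩ ↦ ?_, ?_⟩⟩
    · obtain ⟨b, rfl⟩ := Finsupp.support_subset_singleton'.mp hs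
      have hb : b = c := by
        rw [Finsupp.weight_single, smul_eq_mul, mul_comm] at hx
        exact Nat.eq_of_mul_eq_mul_left hw (by exact_mod_cast hx)
      rw [hb, Set.mem_singleton_iff]
    · rintro rfl
      exact ⟨Finsupp.support_single_subset, by simp [Finsupp.weight_single, mul_comm]⟩
  · have hempty : representations w {j} n = ∅ := by
      refine Set.eq_empty_of_forall_notMem fun x ⟨hs, hx⟩ ↦ hdvd ?_
      obtain ⟨b, rfl⟩ := Finsupp.support_subset_singleton'.mp hs
      rw [← hx, Finsupp.weight_single]
      exact_mod_cast dvd_mul_left (w j) b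
    rw [denumerant, hempty, Set.ncard_empty]

theorem denumerant_eq_add [DecidableEq ι] {s : Finset ι} {i : ι} (hi : i ∈ s) (n : ℤ) :
    denumerant w s n = denumerant w s (n - w i) + denumerant w (s.erase i) n := by
  rw [denumerant, representations_eq_union w hi, Set.ncard_union_eq ?_
    ((finite_representations w _ _).image _) (finite_representations w _ _),
    Set.ncard_image_of_injective _ (add_left_injective _)]
  · rfl
  · refine Set.disjoint_left.mpr ?_
    rintro _ ⟨y, -, rfl⟩ ⟨hs, -⟩
    exact Finset.notMem_erase i s (hs (by simp))

end Denumerant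

/-! ### Popoviciu's formula and its analogue for three weights -/

section Quasipolynomial

/-- Popoviciu's formula: the quasi-polynomial in `n` counting the representations of `n` by two
coprime weights `u` and `v`. -/
def pairQuasipolynomial (u v : ℕ) (n : ℤ) : ℚ :=
  (2 * n + u + v) / (2 * u * v) - sawtooth ((v : ZMod u)⁻¹ * (n : ZMod u))
    - sawtooth ((u : ZMod v)⁻¹ * (n : ZMod v))

theorem pairQuasipolynomial_comm (u v : ℕ) (n : ℤ) :
    pairQuasipolynomial u v n = pairQuasipolynomial v u n := by
  unfold pairQuasipolynomial
  ring

variable {u v w : ℕ} [NeZero u] [NeZero v]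

theorem pairQuasipolynomial_zero : pairQuasipolynomial u v 0 = 1 := by
  have hu : (u : ℚ) ≠ 0 := NeZero.ne _
  have hv : (v : ℚ) ≠ 0 := NeZero.ne _
  simp only [pairQuasipolynomial, Int.cast_zero, mul_zero, sawtooth_zero]
  field_simp
  ring

theorem pairQuasipolynomial_add_left (huv : u.Coprime v) (n : ℤ) :
    pairQuasipolynomial u v (n + u) =
      pairQuasipolynomial u v n + if (v : ℤ) ∣ n + u then 1 else 0 := by
  have hu : (u : ℚ) ≠ 0 := NeZero.ne _
  have hv : (v : ℚ) ≠ 0 := NeZero.ne _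
  have hunit : IsUnit (u : ZMod v) := (ZMod.isUnit_iff_coprime u v).mpr huv
  have hsaw := sawtooth_sub_sawtooth_sub_one ((u : ZMod v)⁻¹ * ((n + u : ℤ) : ZMod v))
  have hprev : (u : ZMod v)⁻¹ * ((n + u : ℤ) : ZMod v) - 1 = (u : ZMod v)⁻¹ * (n : ZMod v) := by
    push_cast
    rw [mul_add, ZMod.inv_mul_of_unit _ hunit, add_sub_cancel_right]
  have hzero : (u : ZMod v)⁻¹ * ((n + u : ℤ) : ZMod v) = 0 ↔ (v : ℤ) ∣ n + u := by
    rw [← ZMod.intCast_zmod_eq_zero_iff_dvd]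
    exact (IsUnit.of_mul_eq_one _ (ZMod.inv_mul_of_unit _ hunit)).mul_right_eq_zero
  have hmod : ((n + u : ℤ) : ZMod u) = n := by simp
  have hlin : (2 * ((n + u : ℤ) : ℚ) + u + v) / (2 * u * v) =
      (2 * n + u + v) / (2 * u * v) + 1 / v := by
    push_cast
    field_simp
    ring
  simp only [hprev, hzero] at hsaw
  rw [pairQuasipolynomial, pairQuasipolynomial, hmod, hlin]
  linarith

/-- The quasi-polynomial in `n` counting the representations of `n` by three pairwise coprime
weights. Each convolution is normalized by its value at `0`, so that the constant term is `1`. -/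
def tripleQuasipolynomial (u v w : ℕ) [NeZero u] [NeZero v] [NeZero w]
    (n : ℤ) : ℚ :=
  1 + n * (n + u + v + w) / (2 * u * v * w)
    + (sawtoothConv (v : ZMod u) w n - sawtoothConv (v : ZMod u) w 0)
    + (sawtoothConv (u : ZMod v) w n - sawtoothConv (u : ZMod v) w 0)
    + (sawtoothConv (u : ZMod w) v n - sawtoothConv (u : ZMod w) v 0)

variable [NeZero w]

theorem tripleQuasipolynomial_comm_left (huw : u.Coprime w) (hvw : v.Coprime w) (n : ℤ) :
    tripleQuasipolynomial u v w n = tripleQuasipolynomial v u w n := by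
  have hu : IsUnit (u : ZMod w) := (ZMod.isUnit_iff_coprime u w).mpr huw
  have hv : IsUnit (v : ZMod w) := (ZMod.isUnit_iff_coprime v w).mpr hvw
  simp only [tripleQuasipolynomial, sawtoothConv_comm hu hv]
  ring

theorem tripleQuasipolynomial_zero : tripleQuasipolynomial u v w 0 = 1 := by
  simp [tripleQuasipolynomial]

theorem tripleQuasipolynomial_add_left (huv : u.Coprime v) (huw : u.Coprime w) (hvw : v.Coprime w)
    (n : ℤ) : tripleQuasipolynomial u v w (n + u) =
      tripleQuasipolynomial u v w n + pairQuasipolynomial v w (n + u) := by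
  have hu : (u : ℚ) ≠ 0 := NeZero.ne _
  have hv : (v : ℚ) ≠ 0 := NeZero.ne _
  have hw : (w : ℚ) ≠ 0 := NeZero.ne _
  have hconv_v := sawtoothConv_sub_sawtoothConv_sub_left ((ZMod.isUnit_iff_coprime u v).mpr huv)
    ((ZMod.isUnit_iff_coprime w v).mpr hvw.symm) ((n + u : ℤ) : ZMod v)
  have hconv_w := sawtoothConv_sub_sawtoothConv_sub_left ((ZMod.isUnit_iff_coprime u w).mpr huw)
    ((ZMod.isUnit_iff_coprime v w).mpr hvw) ((n + u : ℤ) : ZMod w)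
  have hprev (m : ℕ) : ((n + u : ℤ) : ZMod m) - u = n := by simp
  have hmod : ((n + u : ℤ) : ZMod u) = n := by simp
  have hquad : ((n + u : ℤ) : ℚ) * ((n + u : ℤ) + u + v + w) / (2 * u * v * w) =
      n * (n + u + v + w) / (2 * u * v * w) + (2 * (n + u : ℤ) + v + w) / (2 * v * w) := by
    push_cast
    field_simp
    ring
  rw [hprev] at hconv_v hconv_w
  rw [tripleQuasipolynomial, tripleQuasipolynomial, pairQuasipolynomial, hmod, hquad]
  linarith

theorem tripleQuasipolynomial_eq_genusOf {d : ℕ} (huv : u.Coprime v) (huw : u.Coprime w)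
    (hvw : v.Coprime w) (hdu : d ≡ u [MOD u] ∨ d ≡ v [MOD u] ∨ d ≡ w [MOD u])
    (hdv : d ≡ u [MOD v] ∨ d ≡ v [MOD v] ∨ d ≡ w [MOD v])
    (hdw : d ≡ u [MOD w] ∨ d ≡ v [MOD w] ∨ d ≡ w [MOD w]) :
    tripleQuasipolynomial u v w (d - u - v - w) = genusOf u v w d := by
  have hu : (u : ℚ) ≠ 0 := NeZero.ne _
  have hv : (v : ℚ) ≠ 0 := NeZero.ne _
  have hw : (w : ℚ) ≠ 0 := NeZero.ne _
  have hconv_u := sawtoothConv_sub_eq_gcd huv.symm huw.symm hdu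
  have hconv_v := sawtoothConv_sub_eq_gcd huv hvw.symm (or_left_comm.mp hdv)
  have hconv_w := sawtoothConv_sub_eq_gcd huw hvw (or_rotate.mpr hdw)
  have hmod_u : ((d - u - v - w : ℤ) : ZMod u) = d - v - w := by simp
  have hmod_v : ((d - u - v - w : ℤ) : ZMod v) = d - u - w := by simp
  have hmod_w : ((d - u - v - w : ℤ) : ZMod w) = d - u - v := by simp
  rw [tripleQuasipolynomial, hmod_u, hmod_v, hmod_w, hconv_u, hconv_v, hconv_w, genusOf]
  push_cast
  field_simp
  ring

end Quasipolynomial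

section DenumerantFormulas

variable {ι : Type*} [DecidableEq ι] {w : ι → ℕ} [∀ i, NeZero (w i)] {i j k : ι}

theorem denumerant_pair_add_left (hij : i ≠ j) {n : ℤ} (hn : -(w i : ℤ) - w j < n) :
    denumerant w {i, j} (n + w i) =
      denumerant w {i, j} n + if (w j : ℤ) ∣ n + w i then 1 else 0 := by
  rw [denumerant_eq_add w (Finset.mem_insert_self i {j}), add_sub_cancel_right,
    Finset.erase_insert (by simpa using hij), denumerant_singleton w (by linarith)]

theorem denumerant_pair (hij : i ≠ j) (hw : (w i).Coprime (w j)) {n : ℤ}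
    (hn : -(w i : ℤ) - w j < n) :
    (denumerant w {i, j} n : ℚ) = pairQuasipolynomial (w i) (w j) n := by
  have hincr {i j : ι} (hij : i ≠ j) (hw : (w i).Coprime (w j)) (n : ℤ)
      (hn : -(w i : ℤ) - w j < n) :
      (denumerant w {i, j} (n + w i) : ℚ) - denumerant w {i, j} n =
        pairQuasipolynomial (w i) (w j) (n + w i) - pairQuasipolynomial (w i) (w j) n := by
    rw [denumerant_pair_add_left hij hn, pairQuasipolynomial_add_left hw]
    push_cast
    ring
  have hpos : 0 < w i := NeZero.pos _
  refine eq_of_increments_eq (f := fun n ↦ (denumerant w {i, j} n : ℚ)) hw (hincr hij hw)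
    (fun n hn ↦ ?_) (m := 0) (by omega) ?_ hn
  · simp only [pairQuasipolynomial_comm (w i), Finset.pair_comm i]
    exact hincr hij.symm hw.symm n (by linarith)
  · simp [denumerant_zero, pairQuasipolynomial_zero]

theorem denumerant_triple_add_left (hij : i ≠ j) (hik : i ≠ k) (n : ℤ) :
    denumerant w {i, j, k} (n + w i) =
      denumerant w {i, j, k} n + denumerant w {j, k} (n + w i) := by
  rw [denumerant_eq_add w (Finset.mem_insert_self i {j, k}), add_sub_cancel_right,
    Finset.erase_insert (by simp [hij, hik])]

theorem denumerant_triple (hij : i ≠ j) (hik : i ≠ k) (hjk : j ≠ k)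
    (hwij : (w i).Coprime (w j)) (hwik : (w i).Coprime (w k)) (hwjk : (w j).Coprime (w k))
    {n : ℤ} (hn : -(w i : ℤ) - w j - w k < n) :
    (denumerant w {i, j, k} n : ℚ) = tripleQuasipolynomial (w i) (w j) (w k) n := by
  have hincr {i j : ι} (hij : i ≠ j) (hik : i ≠ k) (hjk : j ≠ k) (hwij : (w i).Coprime (w j))
      (hwik : (w i).Coprime (w k)) (hwjk : (w j).Coprime (w k)) (n : ℤ)
      (hn : -(w i : ℤ) - w j - w k < n) :
      (denumerant w {i, j, k} (n + w i) : ℚ) - denumerant w {i, j, k} n =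
        tripleQuasipolynomial (w i) (w j) (w k) (n + w i) -
          tripleQuasipolynomial (w i) (w j) (w k) n := by
    rw [denumerant_triple_add_left hij hik, tripleQuasipolynomial_add_left hwij hwik hwjk,
      Nat.cast_add, denumerant_pair hjk hwjk (by linarith)]
    ring
  have hpos : 0 < w i := NeZero.pos _
  refine eq_of_increments_eq (f := fun n ↦ (denumerant w {i, j, k} n : ℚ)) hwij
    (hincr hij hik hjk hwij hwik hwjk) (fun n hn ↦ ?_) (m := 0) (by omega) ?_ hn
  · simp only [tripleQuasipolynomial_comm_left hwik hwjk, Finset.insert_comm i]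
    exact hincr hij.symm hjk hik hwij.symm hwjk hwik n (by linarith)
  · simp [denumerant_zero, tripleQuasipolynomial_zero]

end DenumerantFormulas

theorem ncard_solutions_eq_denumerant (u v w : ℕ) (n : ℤ) :
    {x : ℤ × ℤ × ℤ | 0 ≤ x.1 ∧ 0 ≤ x.2.1 ∧ 0 ≤ x.2.2 ∧
      x.1 * (u : ℤ) + x.2.1 * (v : ℤ) + x.2.2 * (w : ℤ) = n}.ncard =
      denumerant ![u, v, w] {0, 1, 2} n := by
  have hinj : Function.Injective fun x : Fin 3 →₀ ℕ ↦ ((x 0 : ℤ), (x 1 : ℤ), (x 2 : ℤ)) := by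
    intro x y hxy
    ext i
    fin_cases i <;> simp_all
  rw [denumerant, ← Set.ncard_image_of_injective _ hinj]
  congr 1
  ext ⟨a, b, c⟩
  constructor
  · rintro ⟨ha, hb, hc, h⟩
    lift a to ℕ using ha
    lift b to ℕ using hb
    lift c to ℕ using hc
    refine ⟨Finsupp.equivFunOnFinite.symm ![a, b, c], ⟨fun i _ ↦ ?_, ?_⟩, by simp⟩
    · fin_cases i <;> simp
    · simpa [Finsupp.weight_eq_sum, Fin.sum_univ_three] using h
  · rintro ⟨x, ⟨-, hx⟩, h⟩
    obtain ⟨rfl, rfl, rfl⟩ := by simpa using h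
    simpa [Finsupp.weight_eq_sum, Fin.sum_univ_three] using hx

end WeightedPlaneCurve

open WeightedPlaneCurve in
theorem card_solutions_eq_genus_general {w0 w1 w2 d : ℕ} (h0 : 0 < w0) (h1 : 0 < w1)
    (h2 : 0 < w2) (hd : 0 < d) (h01 : w0.Coprime w1) (h02 : w0.Coprime w2) (h12 : w1.Coprime w2)
    (hd0 : d ≡ w0 [MOD w0] ∨ d ≡ w1 [MOD w0] ∨ d ≡ w2 [MOD w0])
    (hd1 : d ≡ w0 [MOD w1] ∨ d ≡ w1 [MOD w1] ∨ d ≡ w2 [MOD w1])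
    (hd2 : d ≡ w0 [MOD w2] ∨ d ≡ w1 [MOD w2] ∨ d ≡ w2 [MOD w2]) :
    ({v : ℤ × ℤ × ℤ | 0 ≤ v.1 ∧ 0 ≤ v.2.1 ∧ 0 ≤ v.2.2 ∧
      v.1 * (w0 : ℤ) + v.2.1 * (w1 : ℤ) + v.2.2 * (w2 : ℤ)
        = (d : ℤ) - (w0 : ℤ) - (w1 : ℤ) - (w2 : ℤ)}.ncard : ℚ) = genusOf w0 w1 w2 d := by
  have : NeZero w0 := ⟨h0.ne'⟩
  have : NeZero w1 := ⟨h1.ne'⟩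
  have : NeZero w2 := ⟨h2.ne'⟩
  have (i : Fin 3) : NeZero (![w0, w1, w2] i) := by fin_cases i <;> assumption
  rw [ncard_solutions_eq_denumerant, ← tripleQuasipolynomial_eq_genusOf h01 h02 h12 hd0 hd1 hd2]
  exact denumerant_triple (w := ![w0, w1, w2]) (i := 0) (j := 1) (k := 2) (by decide) (by decide)
    (by decide) h01 h02 h12 (by simp only [Matrix.cons_val]; omega)

/-- For a `g`-good quadruple `(w0, w1, w2, d)`, the number of nonnegative integer triples
`(a, b, c)` with `a*w0 + b*w1 + c*w2 = d - w0 - w1 - w2` equals `g`. -/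
theorem card_solutions_eq_genus (g w0 w1 w2 d : ℕ) (hg : 1 ≤ g)
    (h : IsGGoodQuadruple g w0 w1 w2 d) :
    {v : ℤ × ℤ × ℤ | 0 ≤ v.1 ∧ 0 ≤ v.2.1 ∧ 0 ≤ v.2.2 ∧
      v.1 * (w0 : ℤ) + v.2.1 * (w1 : ℤ) + v.2.2 * (w2 : ℤ)
        = (d : ℤ) - (w0 : ℤ) - (w1 : ℤ) - (w2 : ℤ)}.ncard = g := by
  obtain ⟨⟨h0, h1, h2, hd, h01, h02, h12, -, -, -, ⟨k0, -, hd0⟩, ⟨k1, -, hd1⟩, ⟨k2, -, hd2⟩, -⟩,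
    hgenus⟩ := h
  have hmod {k w a : ℕ} (hk : d = k * w + a) : d ≡ a [MOD w] := by simp [hk, Nat.ModEq]
  exact_mod_cast (card_solutions_eq_genus_general h0 h1 h2 hd h01 h02 h12
    (hd0.imp3 hmod hmod hmod) (hd1.imp3 hmod hmod hmod) (hd2.imp3 hmod hmod hmod)).trans hgenus
end

section
/- Let g ≥ 1 be an integer, let (w₀, w₁, w₂, d) be a g-good quadruple, and let P be its associated polytope. Then a lattice point v = (a,b,c) ∈ ℤ³ lying in P belongs to the intrinsic (relative) interior of P if and only if a ≥ 1, b ≥ 1 and c ≥ 1. -/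
/-!
A point `x` of a finite-dimensional convex set lies in its relative interior exactly when every
linear functional that is maximal at `x` is constant on the set.

If `x i ≤ 0`, then `x` maximizes minus the `i`-th coordinate over the polytope, while by condition
(i) some lattice point has a positive `i`-th coordinate, so `x` is not in the relative interior.
Conversely, let all coordinates of `x` be at least `1` and let `f` be maximal at `x`. Choosing `i`
to maximize `f (e i) / w i` and subtracting `f` from a multiple of the weighted degree leaves a
functional `∑ l, β l * y l` with `β ≥ 0` and `β i = 0`, which is minimal at `x`, where it is at
least `∑ l, β l`. Its value at the lattice point `k e_i + e_j` given by (i) is `β j`, so `β l = 0`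
for all `l ≠ j`. With at least three weights there is such an `l ≠ i`, and the lattice point
`a e_i + b e_l` given by (ii) has value `0`. Hence `β = 0`, and `f` is constant.
-/

section RelativeInterior

variable {E : Type*} [NormedAddCommGroup E] [NormedSpace ℝ E] {s : Set E} {x : E}

theorem add_mem_intrinsicInterior_iff (hx : x ∈ s) (v : (affineSpan ℝ s).direction) :
    (v : E) + x ∈ intrinsicInterior ℝ s ↔
      v ∈ interior {u : (affineSpan ℝ s).direction | (u : E) + x ∈ s} := by
  let x' : affineSpan ℝ s := ⟨x, subset_affineSpan ℝ s hx⟩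
  have : Nonempty (affineSpan ℝ s) := ⟨x'⟩
  change _ ↔ v ∈ interior (Homeomorph.vaddConst x' ⁻¹' ((↑) ⁻¹' s))
  rw [← Homeomorph.preimage_interior, mem_intrinsicInterior]
  refine ⟨?_, fun hv => ⟨_, hv, rfl⟩⟩
  rintro ⟨y, hy, hyv⟩
  rwa [Set.mem_preimage, show Homeomorph.vaddConst x' v = y from Subtype.ext hyv.symm]

theorem exists_neg_add_smul_mem_of_mem_intrinsicInterior (hx : x ∈ intrinsicInterior ℝ s) {y : E}
    (hy : y ∈ s) : ∃ t < (0 : ℝ), t • (y - x) + x ∈ s := by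
  have hxs := intrinsicInterior_subset hx
  let v : (affineSpan ℝ s).direction := ⟨y - x, AffineSubspace.vsub_mem_direction
    (subset_affineSpan ℝ s hy) (subset_affineSpan ℝ s hxs)⟩
  have h0 : ∀ᶠ u : (affineSpan ℝ s).direction in nhds 0, (u : E) + x ∈ s :=
    mem_interior_iff_mem_nhds.1 <| (add_mem_intrinsicInterior_iff hxs 0).1 (by simpa using hx)
  have hcont : Filter.Tendsto (fun t : ℝ => t • v) (nhds 0) (nhds 0) :=
    (continuous_id.smul continuous_const).tendsto' _ _ (zero_smul ℝ v)
  have hline : ∀ᶠ t in nhdsWithin (0 : ℝ) (Set.Iio 0), t • (y - x) + x ∈ s :=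
    (hcont.eventually h0).filter_mono nhdsWithin_le_nhds
  exact (eventually_mem_nhdsWithin.and hline).exists

theorem dual_eq_of_mem_intrinsicInterior (hx : x ∈ intrinsicInterior ℝ s) {f : Module.Dual ℝ E}
    (hf : ∀ y ∈ s, f y ≤ f x) {y : E} (hy : y ∈ s) : f y = f x := by
  obtain ⟨t, ht, hts⟩ := exists_neg_add_smul_mem_of_mem_intrinsicInterior hx hy
  have hle := hf _ hts
  simp only [map_add, map_smul, map_sub, smul_eq_mul] at hle
  nlinarith [hf y hy]

theorem exists_dual_lt_of_notMem_intrinsicInterior [FiniteDimensional ℝ E] (hs : Convex ℝ s)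
    (hxs : x ∈ s) (hx : x ∉ intrinsicInterior ℝ s) :
    ∃ f : Module.Dual ℝ E, (∀ y ∈ s, f y ≤ f x) ∧ ∃ y ∈ s, f y < f x := by
  let V := (affineSpan ℝ s).direction
  let T : Set V := {u | (u : E) + x ∈ s}
  have sub_mem {y : E} (hy : y ∈ s) : y - x ∈ V :=
    AffineSubspace.vsub_mem_direction (subset_affineSpan ℝ s hy) (subset_affineSpan ℝ s hxs)
  have hT : Convex ℝ T := (hs.translate_preimage_left x).linear_preimage V.subtype
  have h0 : (0 : V) ∉ interior T := fun h0 =>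
    hx (by simpa using (add_mem_intrinsicInterior_iff hxs 0).2 h0)
  have hTint : (interior T).Nonempty := by
    obtain ⟨z, hz⟩ := Set.Nonempty.intrinsicInterior hs ⟨x, hxs⟩
    exact ⟨⟨z - x, sub_mem (intrinsicInterior_subset hz)⟩,
      (add_mem_intrinsicInterior_iff hxs _).1 (by simpa using hz)⟩
  obtain ⟨f, hf0, hf⟩ := geometric_hahn_banach_of_nonempty_interior_point hT h0 hTint
  obtain ⟨g, hg⟩ := f.toLinearMap.exists_extend
  have hgf (v : V) : g v = f v := LinearMap.congr_fun hg v
  have hle : ∀ y ∈ s, g y ≤ g x := fun y hy => by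
    have := hf ⟨y - x, sub_mem hy⟩ (by simpa [T] using hy)
    rwa [← hgf, map_zero, map_sub, sub_nonpos] at this
  refine ⟨g, hle, ?_⟩
  by_contra! hge
  have hV : V ≤ LinearMap.ker g := by
    change (affineSpan ℝ s).direction ≤ _
    rw [direction_affineSpan, vectorSpan_eq_span_vsub_set_right ℝ hxs, Submodule.span_le]
    rintro _ ⟨y, hy, rfl⟩
    simp [(hle y hy).antisymm (hge y hy)]
  exact hf0 (ContinuousLinearMap.ext fun v => (hgf v).symm.trans (hV v.2))

theorem mem_intrinsicInterior_iff_forall_dual [FiniteDimensional ℝ E] (hs : Convex ℝ s)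
    (hx : x ∈ s) :
    x ∈ intrinsicInterior ℝ s ↔
      ∀ f : Module.Dual ℝ E, (∀ y ∈ s, f y ≤ f x) → ∀ y ∈ s, f y = f x := by
  refine ⟨fun h f hf y hy => dual_eq_of_mem_intrinsicInterior h hf hy, fun h => ?_⟩
  by_contra hx'
  obtain ⟨f, hf, y, hy, hlt⟩ := exists_dual_lt_of_notMem_intrinsicInterior hs hx hx'
  exact hlt.ne (h f hf y hy)

theorem mem_intrinsicInterior_convexHull_iff [FiniteDimensional ℝ E] {t : Set E}
    (hx : x ∈ convexHull ℝ t) :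
    x ∈ intrinsicInterior ℝ (convexHull ℝ t) ↔
      ∀ f : Module.Dual ℝ E, (∀ y ∈ t, f y ≤ f x) → ∀ y ∈ t, f y = f x := by
  rw [mem_intrinsicInterior_iff_forall_dual (convex_convexHull ℝ t) hx]
  refine forall_congr' fun f => ?_
  have hle : (∀ y ∈ convexHull ℝ t, f y ≤ f x) ↔ ∀ y ∈ t, f y ≤ f x :=
    (convex_halfSpace_le f.isLinear (f x)).convexHull_subset_iff
  have heq : (∀ y ∈ convexHull ℝ t, f y = f x) ↔ ∀ y ∈ t, f y = f x :=
    (convex_hyperplane f.isLinear (f x)).convexHull_subset_iff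
  rw [hle, heq]

end RelativeInterior

section WeightedPolytope

variable {ι : Type*} [Fintype ι]

/-- The positivity and divisibility conditions of a good quadruple, for any finite family of
weights: `vertex` is condition (i) and `edge` is condition (ii), which for three weights ranges over
the pairs `{j, k}` complementary to an index. -/
structure IsGoodWeights (w : ι → ℕ) (d : ℕ) : Prop where
  pos : ∀ i, 0 < w i
  vertex : ∀ i, ∃ k j, 0 < k ∧ d = k * w i + w j
  edge : ∀ ⦃i j⦄, i ≠ j → ∃ a b, d = a * w i + b * w j

/-- The exponent vectors of the monomials of weighted degree `d`, encoded as nonnegative integer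
vectors. -/
def weightedLatticePts (w : ι → ℕ) (d : ℕ) : Set (ι → ℤ) :=
  {v | (∀ i, 0 ≤ v i) ∧ ∑ i, v i * (w i : ℤ) = d}

/-- The Newton polytope of a general weighted homogeneous polynomial of degree `d`. -/
def weightedPolytope (w : ι → ℕ) (d : ℕ) : Set (ι → ℝ) :=
  convexHull ℝ ((fun v i => (v i : ℝ)) '' weightedLatticePts w d)

variable {w : ι → ℕ} {d : ℕ}

theorem mem_intrinsicInterior_weightedPolytope_iff {x : ι → ℝ} (hx : x ∈ weightedPolytope w d) :
    x ∈ intrinsicInterior ℝ (weightedPolytope w d) ↔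
      ∀ f : Module.Dual ℝ (ι → ℝ), (∀ v ∈ weightedLatticePts w d, f (fun i => v i) ≤ f x) →
        ∀ v ∈ weightedLatticePts w d, f (fun i => v i) = f x := by
  rw [weightedPolytope, mem_intrinsicInterior_convexHull_iff hx]
  simp only [Set.forall_mem_image]

theorem sum_mul_weight_of_mem_weightedPolytope {x : ι → ℝ} (hx : x ∈ weightedPolytope w d) :
    ∑ i, x i * w i = d := by
  have hlin : IsLinearMap ℝ fun y : ι → ℝ => ∑ i, y i * (w i : ℝ) :=
    ⟨fun y z => by simp [add_mul, Finset.sum_add_distrib],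
      fun c y => by simp [mul_assoc, Finset.mul_sum]⟩
  refine convexHull_min ?_ (convex_hyperplane hlin (d : ℝ)) hx
  rintro _ ⟨v, hv, rfl⟩
  change ∑ i, (v i : ℝ) * w i = d
  exact_mod_cast hv.2

theorem single_add_single_mem_weightedLatticePts [DecidableEq ι] {i j : ι} {a b : ℕ}
    (h : d = a * w i + b * w j) :
    Pi.single i (a : ℤ) + Pi.single j (b : ℤ) ∈ weightedLatticePts w d := by
  have nonneg (l : ι) (n : ℕ) : 0 ≤ (Pi.single l (n : ℤ) : ι → ℤ) :=
    Pi.single_nonneg.2 n.cast_nonneg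
  refine ⟨add_nonneg (nonneg i a) (nonneg j b), ?_⟩
  simp [add_mul, Finset.sum_add_distrib, Pi.single_apply, h]

theorem IsGoodWeights.exists_latticePt_pos (h : IsGoodWeights w d) (i : ι) :
    ∃ v ∈ weightedLatticePts w d, 0 < v i := by
  classical
  obtain ⟨k, j, hk, hkj⟩ := h.vertex i
  refine ⟨_, single_add_single_mem_weightedLatticePts (b := 1) (by simpa using hkj), ?_⟩
  have hj : (0 : ι → ℤ) ≤ Pi.single j 1 := Pi.single_nonneg.2 zero_le_one
  simpa using add_pos_of_pos_of_nonneg (Int.natCast_pos.2 hk) (hj i)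

theorem IsGoodWeights.pos_of_mem_intrinsicInterior (h : IsGoodWeights w d) {x : ι → ℝ}
    (hx : x ∈ intrinsicInterior ℝ (weightedPolytope w d)) (i : ι) : 0 < x i := by
  by_contra! hxi
  obtain ⟨v, hv, hvi⟩ := h.exists_latticePt_pos i
  have hface := (mem_intrinsicInterior_weightedPolytope_iff (intrinsicInterior_subset hx)).1 hx
    (-LinearMap.proj i) (fun u hu => ?_) v hv
  · have : (v i : ℝ) = x i := by simpa using hface
    have : (0:ℝ) < v i := by exact_mod_cast hvi
    linarith
  · have : (0 : ℝ) ≤ u i := by exact_mod_cast hu.1 i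
    simpa using hxi.trans this

theorem IsGoodWeights.eq_zero_of_sum_le (h : IsGoodWeights w d) (hι : 3 ≤ Fintype.card ι)
    {β : ι → ℝ} (hβ : 0 ≤ β) {i : ι} (hi : β i = 0)
    (hmin : ∀ v ∈ weightedLatticePts w d, ∑ l, β l ≤ ∑ l, v l * β l) : β = 0 := by
  classical
  have hmin' {i j : ι} {a b : ℕ} (hd : d = a * w i + b * w j) :
      ∑ l, β l ≤ a * β i + b * β j := by
    simpa [add_mul, Finset.sum_add_distrib, Pi.single_apply]
      using hmin _ (single_add_single_mem_weightedLatticePts hd)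
  obtain ⟨k, j, -, hkj⟩ := h.vertex i
  obtain ⟨l, hli, hlj⟩ := ENat.exists_ne_ne_of_three_le (by simpa using mod_cast hι) i j
  have hl : β l = 0 := by
    have hsum : ∑ m, β m ≤ β j := by
      simpa only [hi, mul_zero, zero_add, Nat.cast_one, one_mul] using
        hmin' (i := i) (j := j) (a := k) (b := 1) (by rwa [one_mul])
    have hpair : β l + β j ≤ ∑ m, β m := by
      rw [← Finset.sum_pair hlj]
      exact Finset.sum_le_univ_sum_of_nonneg hβ
    exact le_antisymm (by linarith) (hβ l)
  obtain ⟨a, b, hab⟩ := h.edge hli.symm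
  have hsum : ∑ m, β m ≤ 0 := by simpa [hi, hl] using hmin' hab
  exact (Fintype.sum_eq_zero_iff_of_nonneg hβ).1 (hsum.antisymm (Fintype.sum_nonneg hβ))

theorem exists_dual_eq_mul_sum_sub_sum [Nonempty ι] {c : ι → ℝ} (hc : ∀ i, 0 < c i)
    (f : Module.Dual ℝ (ι → ℝ)) :
    ∃ (M : ℝ) (β : ι → ℝ) (i : ι), 0 ≤ β ∧ β i = 0 ∧
      ∀ y, f y = M * ∑ j, y j * c j - ∑ j, y j * β j := by
  classical
  let e (j : ι) : ι → ℝ := Pi.single j 1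
  have hf (y : ι → ℝ) : f y = ∑ j, y j * f (e j) := by
    conv_lhs => rw [pi_eq_sum_univ' y]
    simp [e]
  obtain ⟨i, hi⟩ := Finite.exists_max fun j => f (e j) / c j
  refine ⟨f (e i) / c i, fun j => f (e i) / c i * c j - f (e j), i, fun j => ?_, ?_, fun y => ?_⟩
  · exact sub_nonneg.2 ((div_le_iff₀ (hc j)).1 (hi j))
  · exact sub_eq_zero.2 (div_mul_cancel₀ _ (hc i).ne')
  · rw [hf, Finset.mul_sum, ← Finset.sum_sub_distrib]
    exact Finset.sum_congr rfl fun j _ => by ring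

theorem IsGoodWeights.mem_intrinsicInterior_of_one_le (h : IsGoodWeights w d)
    (hι : 3 ≤ Fintype.card ι) {x : ι → ℝ} (hx : x ∈ weightedPolytope w d) (hx1 : ∀ i, 1 ≤ x i) :
    x ∈ intrinsicInterior ℝ (weightedPolytope w d) := by
  have : Nonempty ι := Fintype.card_pos_iff.1 (by omega)
  refine (mem_intrinsicInterior_weightedPolytope_iff hx).2 fun f hf v hv => ?_
  obtain ⟨M, β, i, hβ, hi, hfβ⟩ := exists_dual_eq_mul_sum_sub_sum
    (c := fun i => (w i : ℝ)) (fun i => by exact_mod_cast h.pos i) f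
  have hfx : f x = M * d - ∑ l, x l * β l := by
    rw [hfβ, sum_mul_weight_of_mem_weightedPolytope hx]
  have hfv {v : ι → ℤ} (hv : v ∈ weightedLatticePts w d) :
      f (fun l => v l) = M * d - ∑ l, v l * β l := by
    rw [hfβ]
    congr 2
    exact_mod_cast hv.2
  have hβ0 : β = 0 := h.eq_zero_of_sum_le hι hβ hi fun v hv => calc
    ∑ l, β l ≤ ∑ l, x l * β l :=
      Finset.sum_le_sum fun l _ => le_mul_of_one_le_left (hβ l) (hx1 l)
    _ ≤ ∑ l, v l * β l := by linarith [hf v hv, hfv hv]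
  simp [hfv hv, hfx, hβ0]

theorem mem_intrinsicInterior_iff_general (h : IsGoodWeights w d) (hι : 3 ≤ Fintype.card ι)
    {v : ι → ℤ} (hv : (fun i => (v i : ℝ)) ∈ weightedPolytope w d) :
    (fun i => (v i : ℝ)) ∈ intrinsicInterior ℝ (weightedPolytope w d) ↔ ∀ i, 1 ≤ v i := by
  refine ⟨fun hi i => ?_, fun h1 => ?_⟩
  · exact_mod_cast h.pos_of_mem_intrinsicInterior hi i
  · exact h.mem_intrinsicInterior_of_one_le hι hv fun i => by exact_mod_cast h1 i

end WeightedPolytope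

theorem polytopeOf_eq_weightedPolytope (w0 w1 w2 d : ℕ) :
    polytopeOf w0 w1 w2 d = weightedPolytope ![w0, w1, w2] d := by
  have hpts : latticePts w0 w1 w2 d = weightedLatticePts ![w0, w1, w2] d := by
    simp [latticePts, weightedLatticePts, Fin.sum_univ_three]
  rw [polytopeOf, hpts]
  rfl

theorem IsGoodQuadruple.isGoodWeights {w0 w1 w2 d : ℕ} (h : IsGoodQuadruple w0 w1 w2 d) :
    IsGoodWeights ![w0, w1, w2] d := by
  obtain ⟨h0, h1, h2, -, -, -, -, -, -, -, vertex0, vertex1, vertex2, edge12, edge02,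
    edge01⟩ := h
  have swap {u v : ℕ} : (∃ a b : ℕ, d = a * u + b * v) → ∃ a b : ℕ, d = a * v + b * u :=
    fun ⟨a, b, e⟩ => ⟨b, a, e.trans (add_comm _ _)⟩
  refine ⟨?_, ?_, ?_⟩
  · simp [Fin.forall_fin_succ, h0, h1, h2]
  · simpa [Fin.forall_fin_succ, Fin.exists_fin_succ] using ⟨vertex0, vertex1, vertex2⟩
  · simpa [Fin.forall_fin_succ] using
      ⟨⟨edge01, edge02⟩, ⟨swap edge01, edge12⟩, swap edge02, swap edge12⟩

/-- For a `g`-good quadruple with associated polytope `P`, a lattice point of `P` lies in the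
relative (intrinsic) interior of `P` if and only if all of its coordinates are at least `1`. -/
theorem mem_intrinsicInterior_iff (g w0 w1 w2 d : ℕ) (hg : 1 ≤ g)
    (h : IsGGoodQuadruple g w0 w1 w2 d) (v : Fin 3 → ℤ)
    (hv : toR3 v ∈ polytopeOf w0 w1 w2 d) :
    toR3 v ∈ intrinsicInterior ℝ (polytopeOf w0 w1 w2 d) ↔ (1 ≤ v 0 ∧ 1 ≤ v 1 ∧ 1 ≤ v 2) := by
  rw [polytopeOf_eq_weightedPolytope] at hv ⊢
  exact (mem_intrinsicInterior_iff_general h.1.isGoodWeights (by simp) hv).trans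
    (by simp [Fin.forall_fin_succ])
end

section
/- Let w₀, w₁, w₂, d be positive integers with w₀, w₁, w₂ pairwise coprime. Let v₁, v₂, v₃ ∈ ℤ³ be lattice points each satisfying w₀·x + w₁·y + w₂·z = d (where (x,y,z) denotes the coordinates of vᵢ). Then d divides the determinant of the 3×3 integer matrix whose rows are v₁, v₂, v₃. -/
/-!
If `A` has rows `vᵢ` and `w` is the weight vector, then every entry of `A w` is divisible by `d`.
Multiplying by the adjugate gives `det A • w = adj A (A w)`, so `d` divides `det A * wⱼ` for each
`j`; as the weights generate the unit ideal, `d` divides `det A`.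
-/

open Matrix

theorem span_range_eq_top_of_isCoprime {R ι : Type*} [CommSemiring R] {w : ι → R} {i j : ι}
    (h : IsCoprime (w i) (w j)) : Ideal.span (Set.range w) = ⊤ := by
  obtain ⟨a, b, hab⟩ := h
  rw [Ideal.eq_top_iff_one, ← hab]
  exact add_mem (Ideal.mul_mem_left _ a (Ideal.subset_span ⟨i, rfl⟩))
    (Ideal.mul_mem_left _ b (Ideal.subset_span ⟨j, rfl⟩))

theorem dvd_of_forall_dvd_mul_of_span_range_eq_top {R ι : Type*} [CommSemiring R] {w : ι → R}
    {d x : R} (hw : Ideal.span (Set.range w) = ⊤) (h : ∀ i, d ∣ x * w i) : d ∣ x := by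
  rw [← Ideal.mem_span_singleton]
  refine Submodule.mem_of_span_top_of_smul_mem _ _ hw x ?_
  rintro ⟨_, i, rfl⟩
  rw [smul_eq_mul, mul_comm, Ideal.mem_span_singleton]
  exact h i

section

variable {R n : Type*} [CommRing R] [Fintype n] [DecidableEq n]

theorem adjugate_mulVec_mulVec (A : Matrix n n R) (w : n → R) :
    A.adjugate *ᵥ (A *ᵥ w) = A.det • w := by
  rw [mulVec_mulVec, adjugate_mul, smul_mulVec, one_mulVec]

theorem dvd_det_mul_of_forall_dvd_mulVec {A : Matrix n n R} {w : n → R} {d : R}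
    (hA : ∀ i, d ∣ (A *ᵥ w) i) (j : n) : d ∣ A.det * w j := by
  rw [← smul_eq_mul, ← Pi.smul_apply, ← adjugate_mulVec_mulVec]
  exact Finset.dvd_sum fun i _ ↦ (hA i).mul_left (A.adjugate j i)

theorem d_dvd_det_general {A : Matrix n n R} {w : n → R} {d : R}
    (hw : Ideal.span (Set.range w) = ⊤) (hA : ∀ i, d ∣ (A *ᵥ w) i) : d ∣ A.det :=
  dvd_of_forall_dvd_mul_of_span_range_eq_top hw (dvd_det_mul_of_forall_dvd_mulVec hA)

end

/-- If `w0, w1, w2` are pairwise coprime positive integers and `v1, v2, v3 ∈ ℤ³` all lie on the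
plane `w0*x + w1*y + w2*z = d`, then `d` divides the determinant of the matrix with rows
`v1, v2, v3`. -/
theorem d_dvd_det (w0 w1 w2 d : ℕ) (hw0 : 0 < w0) (hw1 : 0 < w1) (hw2 : 0 < w2) (hd : 0 < d)
    (h01 : Nat.Coprime w0 w1) (h02 : Nat.Coprime w0 w2) (h12 : Nat.Coprime w1 w2)
    (v1 v2 v3 : Fin 3 → ℤ)
    (hv1 : (w0 : ℤ) * v1 0 + (w1 : ℤ) * v1 1 + (w2 : ℤ) * v1 2 = (d : ℤ))
    (hv2 : (w0 : ℤ) * v2 0 + (w1 : ℤ) * v2 1 + (w2 : ℤ) * v2 2 = (d : ℤ))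
    (hv3 : (w0 : ℤ) * v3 0 + (w1 : ℤ) * v3 1 + (w2 : ℤ) * v3 2 = (d : ℤ)) :
    (d : ℤ) ∣ (Matrix.of ![v1, v2, v3]).det := by
  refine d_dvd_det_general (w := ![(w0 : ℤ), w1, w2])
    (span_range_eq_top_of_isCoprime (i := 0) (j := 1) h01.isCoprime) fun i ↦ ?_
  fin_cases i <;> simp [mulVec, dotProduct, Fin.sum_univ_three, mul_comm, hv1, hv2, hv3]
end

section
/- Let g ≥ 1 be an integer and let Q = (w₀, w₁, w₂, d) be a g-good quadruple with associated polytope P. For each i ∈ {0,1,2}, let uᵢ ∈ ℤ³₍≥0₎ be a lattice point of P such that the sum of the two coordinates of uᵢ other than the i-th coordinate is at most 1, and assume u₀, u₁, u₂ are pairwise distinct; let Δ be the convex hull in ℝ³ of {u₀, u₁, u₂} (the distinguished triangle). If p₁, p₂, p₃ ∈ ℤ³ ∩ Δ are affinely independent and the convex hull of {p₁, p₂, p₃} contains no lattice point of ℤ³ other than p₁, p₂, p₃, then |det(p₁, p₂, p₃)| = d. -/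
/-!
The vertices of the triangle lie in a plane `w ⬝ᵥ x = d` with `w` primitive, so its edge vectors lie
in the rank two lattice `{x ∈ ℤ³ | w ⬝ᵥ x = 0}`. Emptiness makes them generate that lattice: modulo
the edges every lattice vector is represented in the half-open parallelogram they span, and the
reflection of that parallelogram in its centre moves its outer half into the triangle. If
`w ⬝ᵥ v = 1`, then `v` and the two edges therefore generate `ℤ³`, and every vertex is congruent to
`d • v` modulo the edges.
-/

open Matrix Module Submodule Set

lemma linearIndependent_vsub_of_affineIndependent {K V P : Type*} [Ring K] [AddCommGroup V]
    [Module K V] [AddTorsor V P] {n : ℕ} {x : Fin (n + 1) → P} (hx : AffineIndependent K x) :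
    LinearIndependent K fun i : Fin n => (x i.succ -ᵥ x 0 : V) :=
  ((affineIndependent_iff_linearIndependent_vsub K x 0).mp hx).comp
    (fun i => ⟨i.succ, i.succ_ne_zero⟩)
    fun _ _ hij => Fin.succ_injective _ (congrArg Subtype.val hij)

section EmptyTriangle

variable (𝕜 : Type*) {M V : Type*} [Field 𝕜] [LinearOrder 𝕜] [AddCommGroup M] [AddCommGroup V]
  [Module 𝕜 V]

/-- `p`, `q`, `r` are the vertices of an empty triangle: they are affinely independent and no other
element of `M` lies in their convex hull. Both conditions refer to the images under `ι`, the map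
that places the lattice `M` in the vector space `V`. -/
structure IsEmptyTriangle (ι : M →+ V) (p q r : M) : Prop where
  affineIndependent : AffineIndependent 𝕜 ![ι p, ι q, ι r]
  eq_vertex_of_mem : ∀ s : M, ι s ∈ convexHull 𝕜 {ι p, ι q, ι r} → s = p ∨ s = q ∨ s = r

variable {𝕜} {ι : M →+ V} {p q r : M}

lemma IsEmptyTriangle.linearIndependent (h : IsEmptyTriangle 𝕜 ι p q r) :
    LinearIndependent 𝕜 ![ι (q - p), ι (r - p)] := by
  have edges_eq : (fun i : Fin 2 => ![ι p, ι q, ι r] i.succ -ᵥ ![ι p, ι q, ι r] 0) =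
      ![ι (q - p), ι (r - p)] := by
    ext i
    fin_cases i <;> simp
  exact edges_eq ▸ linearIndependent_vsub_of_affineIndependent h.affineIndependent

variable [IsStrictOrderedRing 𝕜]

lemma add_smul_sub_add_smul_sub_mem_convexHull {a b c : V} {x y : 𝕜} (hx : 0 ≤ x) (hy : 0 ≤ y)
    (hxy : x + y ≤ 1) :
    a + x • (b - a) + y • (c - a) ∈ convexHull 𝕜 {a, b, c} := by
  have hsum := (convex_convexHull 𝕜 {a, b, c}).sum_mem (t := Finset.univ)
    (w := ![1 - x - y, x, y]) (z := ![a, b, c])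
    (by simp [Fin.forall_fin_succ, hx, hy, le_sub_iff_add_le', hxy])
    (by simp only [Fin.sum_univ_three, cons_val_zero, cons_val_one, cons_val]; ring)
    (fun i _ => subset_convexHull 𝕜 _ (by fin_cases i <;> simp))
  convert hsum using 1
  simp only [Fin.sum_univ_three, cons_val_zero, cons_val_one, cons_val]
  module

lemma IsEmptyTriangle.eq_zero_of_eq_smul_add_smul (h : IsEmptyTriangle 𝕜 ι p q r) {c : M} {x y : 𝕜}
    (hx : x ∈ Ico 0 1) (hy : y ∈ Ico 0 1) (hxy : x + y ≤ 1)
    (hc : ι c = x • ι (q - p) + y • ι (r - p)) :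
    c = 0 := by
  have coeff_eq {x' y' : 𝕜} (hc' : ι c = x' • ι (q - p) + y' • ι (r - p)) : x = x' ∧ y = y' :=
    h.linearIndependent.eq_of_pair (hc.symm.trans hc')
  have hmem : ι (p + c) ∈ convexHull 𝕜 {ι p, ι q, ι r} := by
    simpa only [map_add, map_sub, hc, add_assoc] using
      add_smul_sub_add_smul_sub_mem_convexHull (a := ι p) (b := ι q) (c := ι r) hx.1 hy.1 hxy
  rcases h.eq_vertex_of_mem _ hmem with hp | hq | hr
  · exact add_eq_left.mp hp
  · exact absurd (coeff_eq (x' := 1) (y' := 0) (by simp [← hq])).1 hx.2.ne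
  · exact absurd (coeff_eq (x' := 0) (y' := 1) (by simp [← hr])).2 hy.2.ne

theorem IsEmptyTriangle.mem_span_int [FloorRing 𝕜] (h : IsEmptyTriangle 𝕜 ι p q r) {c : M}
    (hc : ι c ∈ span 𝕜 {ι (q - p), ι (r - p)}) :
    c ∈ span ℤ {q - p, r - p} := by
  obtain ⟨x, y, hxy⟩ := mem_span_pair.mp hc
  set e := c - (⌊x⌋ • (q - p) + ⌊y⌋ • (r - p)) with he
  have hιe : ι e = Int.fract x • ι (q - p) + Int.fract y • ι (r - p) := by
    simp only [he, map_sub ι c, map_add, map_zsmul, ← hxy, Int.fract, sub_smul,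
      Int.cast_smul_eq_zsmul]
    abel
  have hx : Int.fract x ∈ Ico (0 : 𝕜) 1 := ⟨Int.fract_nonneg x, Int.fract_lt_one x⟩
  have hy : Int.fract y ∈ Ico (0 : 𝕜) 1 := ⟨Int.fract_nonneg y, Int.fract_lt_one y⟩
  suffices e = 0 from mem_span_pair.mpr ⟨⌊x⌋, ⌊y⌋, (sub_eq_zero.mp this).symm⟩
  rcases le_or_gt (Int.fract x + Int.fract y) 1 with hle | hlt
  · exact h.eq_zero_of_eq_smul_add_smul hx hy hle hιe
  · have hreflect : ι ((q - p) + (r - p) - e) =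
        (1 - Int.fract x) • ι (q - p) + (1 - Int.fract y) • ι (r - p) := by
      rw [map_sub ι _ e, map_add ι (q - p), hιe]
      module
    have hzero := h.eq_zero_of_eq_smul_add_smul ⟨by linarith [hx.2], by linarith [hy.2]⟩
      ⟨by linarith [hy.2], by linarith [hx.2]⟩ (by linarith) hreflect
    rw [hzero, map_zero] at hreflect
    have hfract := (LinearIndependent.pair_iff.mp h.linearIndependent _ _ hreflect.symm).1
    linarith [hx.2]

end EmptyTriangle

lemma span_range_eq_ker_of_card_add_one_eq_finrank {K V ι : Type*} [Field K] [AddCommGroup V]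
    [Module K V] [Fintype ι] {φ : Dual K V} (hφ : φ ≠ 0) {v : ι → V} (hv : LinearIndependent K v)
    (hφv : ∀ i, φ (v i) = 0) (hcard : Fintype.card ι + 1 = finrank K V) :
    span K (range v) = LinearMap.ker φ := by
  have : FiniteDimensional K V := .of_finrank_pos (by omega)
  refine eq_of_le_of_finrank_eq (span_le.mpr (range_subset_iff.mpr hφv)) ?_
  have hfinrank := Dual.finrank_ker_add_one_of_ne_zero hφ
  rw [finrank_span_eq_card hv]
  omega

section Determinant

variable {R : Type*} [CommRing R]

lemma isUnit_det_of_span_range_eq_top {m : Type*} [Fintype m] [DecidableEq m] {A : Matrix m m R}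
    (hA : span R (range A) = ⊤) : IsUnit A.det := by
  rw [← isUnit_iff_isUnit_det, ← vecMul_surjective_iff_isUnit]
  exact LinearMap.range_eq_top.mp ((range_vecMulLinear A).trans hA)

variable {n : ℕ} {e : Fin n → Fin (n + 1) → R}

lemma det_vecCons_eq_zero_of_mem_span {x : Fin (n + 1) → R} (hx : x ∈ span R (range e)) :
    det (of (vecCons x e)) = 0 := by
  induction hx using span_induction with
  | mem x hx =>
    obtain ⟨i, rfl⟩ := hx
    exact det_zero_of_row_eq (Fin.succ_ne_zero i).symm rfl
  | zero => exact det_eq_zero_of_row_eq_zero 0 fun _ => rfl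
  | add x y _ _ hx hy =>
    calc det (of (vecCons (x + y) e))
      _ = det (of (vecCons x e)) + det (of (vecCons y e)) :=
        detRowAlternating.map_vecCons_add e x y
      _ = 0 := by rw [hx, hy, add_zero]
  | smul a x _ hx =>
    exact (detRowAlternating.map_vecCons_smul e a x).trans (smul_eq_zero_of_right a hx)

theorem associated_det_vecCons {φ : Dual R (Fin (n + 1) → R)} {v : Fin (n + 1) → R} (hv : φ v = 1)
    (he : LinearMap.ker φ ≤ span R (range e)) (x : Fin (n + 1) → R) :
    Associated (φ x) (det (of (vecCons x e))) := by
  have hsub (y : Fin (n + 1) → R) : y - φ y • v ∈ span R (range e) := he (by simp [hv])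
  have hunit : IsUnit (det (of (vecCons v e))) := by
    refine isUnit_det_of_span_range_eq_top (eq_top_iff.mpr fun y _ => ?_)
    change y ∈ span R (range (vecCons v e))
    rw [range_cons, singleton_union]
    exact mem_span_insert.mpr ⟨φ y, _, hsub y, (add_sub_cancel _ _).symm⟩
  have hdet : det (of (vecCons x e)) = φ x * det (of (vecCons v e)) :=
    calc det (of (vecCons x e))
      _ = detRowAlternating (vecCons (φ x • v + (x - φ x • v)) e) := by
        rw [add_sub_cancel]; rfl
      _ = φ x * det (of (vecCons v e)) + det (of (vecCons (x - φ x • v) e)) := by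
        rw [AlternatingMap.map_vecCons_add, AlternatingMap.map_vecCons_smul]; rfl
      _ = φ x * det (of (vecCons v e)) := by
        rw [det_vecCons_eq_zero_of_mem_span (hsub x), add_zero]
  exact hdet ▸ associated_mul_unit_right _ _ hunit

lemma det_eq_det_vecCons_sub (A : Matrix (Fin (n + 1)) (Fin (n + 1)) R) :
    A.det = det (of (vecCons (A 0) fun i => A i.succ - A 0)) := by
  refine det_eq_of_forall_row_eq_smul_add_const (vecCons 0 1) 0 rfl fun i j => ?_
  cases i using Fin.cases <;> simp

end Determinant

/-- The embedding `toR3` of the lattice `ℤ³` in `ℝ³` as an additive homomorphism, the form in which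
`IsEmptyTriangle` takes it. -/
def toR3Hom : (Fin 3 → ℤ) →+ (Fin 3 → ℝ) := (Int.castAddHom ℝ).compLeft (Fin 3)

lemma toR3_dotProduct_toR3 (x y : Fin 3 → ℤ) : toR3 x ⬝ᵥ toR3 y = (x ⬝ᵥ y : ℤ) := by
  simp [toR3, dotProduct]

lemma toR3_injective : Function.Injective toR3 := Int.cast_injective.comp_left

lemma IsEmptyTriangle.mem_span_int_of_dotProduct_eq_zero {w p q r c : Fin 3 → ℤ} (hw : w ≠ 0)
    (h : IsEmptyTriangle ℝ toR3Hom p q r) (hq : w ⬝ᵥ (q - p) = 0) (hr : w ⬝ᵥ (r - p) = 0)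
    (hc : w ⬝ᵥ c = 0) : c ∈ span ℤ {q - p, r - p} := by
  let φ : Dual ℝ (Fin 3 → ℝ) := dotProductEquiv ℝ (Fin 3) (toR3 w)
  have hφ : φ ≠ 0 := by
    rw [Ne, LinearEquiv.map_eq_zero_iff]
    exact toR3_injective.ne_iff' (funext fun _ => Int.cast_zero) |>.mpr hw
  have φ_toR3_eq_zero {x : Fin 3 → ℤ} (hx : w ⬝ᵥ x = 0) : φ (toR3 x) = 0 :=
    (toR3_dotProduct_toR3 w x).trans (by rw [hx, Int.cast_zero])
  have hker := span_range_eq_ker_of_card_add_one_eq_finrank hφ h.linearIndependent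
    (Fin.forall_fin_two.mpr ⟨φ_toR3_eq_zero hq, φ_toR3_eq_zero hr⟩) (by simp)
  refine h.mem_span_int ?_
  rw [← range_cons_cons_empty _ _ ![], hker]
  exact φ_toR3_eq_zero hc

lemma dotProduct_eq_of_mem_convexHull {𝕜 n : Type*} [Fintype n] [CommSemiring 𝕜] [PartialOrder 𝕜]
    [IsOrderedRing 𝕜] {w x : n → 𝕜} {d : 𝕜} {s : Set (n → 𝕜)} (hs : ∀ y ∈ s, w ⬝ᵥ y = d)
    (hx : x ∈ convexHull 𝕜 s) : w ⬝ᵥ x = d :=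
  convexHull_min hs (convex_hyperplane (dotProductBilin 𝕜 𝕜 w).isLinear d) hx

lemma dotProduct_eq_of_mem_polytopeOf {w0 w1 w2 d : ℕ} {x : Fin 3 → ℝ}
    (hx : x ∈ polytopeOf w0 w1 w2 d) : toR3 ![w0, w1, w2] ⬝ᵥ x = d := by
  refine dotProduct_eq_of_mem_convexHull ?_ hx
  rintro _ ⟨v, ⟨-, hv⟩, rfl⟩
  rw [toR3_dotProduct_toR3, vec3_dotProduct, ← Int.cast_natCast d, ← hv]
  simp [mul_comm]

lemma dotProduct_eq_of_subset_polytopeOf {w0 w1 w2 d : ℕ} {s : Set (Fin 3 → ℝ)} {p : Fin 3 → ℤ}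
    (hs : s ⊆ polytopeOf w0 w1 w2 d) (hp : toR3 p ∈ convexHull ℝ s) :
    ![(w0 : ℤ), w1, w2] ⬝ᵥ p = d := by
  have hplane := dotProduct_eq_of_mem_polytopeOf (convexHull_min hs (convex_convexHull ℝ _) hp)
  rw [toR3_dotProduct_toR3] at hplane
  exact_mod_cast hplane

lemma exists_dotProduct_eq_one_of_isCoprime {R : Type*} [CommRing R] {a b : R} (h : IsCoprime a b)
    (c : R) : ∃ v : Fin 3 → R, ![a, b, c] ⬝ᵥ v = 1 := by
  obtain ⟨x, y, hxy⟩ := h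
  exact ⟨![x, y, 0], by simp [← hxy, mul_comm]⟩

theorem abs_det_eq_d_of_empty_triangle_general {w v p q r : Fin 3 → ℤ} {d : ℤ} (hwv : w ⬝ᵥ v = 1)
    (hp : w ⬝ᵥ p = d) (hq : w ⬝ᵥ q = d) (hr : w ⬝ᵥ r = d) (h : IsEmptyTriangle ℝ toR3Hom p q r) :
    |(of ![p, q, r]).det| = |d| := by
  have hw : w ≠ 0 := by
    rintro rfl
    simp at hwv
  have hker : LinearMap.ker (dotProductEquiv ℤ (Fin 3) w) ≤ span ℤ (range ![q - p, r - p]) := by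
    rw [range_cons_cons_empty]
    exact fun c hc => h.mem_span_int_of_dotProduct_eq_zero hw
      (by rw [dotProduct_sub, hq, hp, sub_self]) (by rw [dotProduct_sub, hr, hp, sub_self]) hc
  have hdet : (of ![p, q, r]).det = (of ![p, q - p, r - p]).det := by
    rw [det_eq_det_vecCons_sub]
    congr
    ext i
    fin_cases i <;> rfl
  have hassoc : Associated d (of ![p, q - p, r - p]).det := hp ▸ associated_det_vecCons hwv hker p
  rw [hdet]
  exact (abs_eq_abs.mpr (Int.associated_iff.mp hassoc)).symm

/-- Let `Q = (w0, w1, w2, d)` be a `g`-good quadruple with associated polytope `P`, and let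
`u 0, u 1, u 2` be pairwise distinct nonnegative lattice points of `P` such that for each `i`,
the sum of the two coordinates of `u i` other than the `i`-th is at most `1` (the vertices of
the distinguished triangle `Δ`). If `p1, p2, p3` are affinely independent lattice points of `Δ`
whose convex hull contains no lattice points other than `p1, p2, p3`, then the determinant of the
matrix with rows `p1, p2, p3` has absolute value `d`. -/
theorem abs_det_eq_d_of_empty_triangle (g w0 w1 w2 d : ℕ) (hg : 1 ≤ g)
    (h : IsGGoodQuadruple g w0 w1 w2 d)
    (u : Fin 3 → Fin 3 → ℤ)
    (hu_nonneg : ∀ i j, 0 ≤ u i j)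
    (hu_mem : ∀ i, toR3 (u i) ∈ polytopeOf w0 w1 w2 d)
    (hu0 : u 0 1 + u 0 2 ≤ 1) (hu1 : u 1 0 + u 1 2 ≤ 1) (hu2 : u 2 0 + u 2 1 ≤ 1)
    (hu_ne : u 0 ≠ u 1 ∧ u 0 ≠ u 2 ∧ u 1 ≠ u 2)
    (p1 p2 p3 : Fin 3 → ℤ)
    (hp1 : toR3 p1 ∈ convexHull ℝ {toR3 (u 0), toR3 (u 1), toR3 (u 2)})
    (hp2 : toR3 p2 ∈ convexHull ℝ {toR3 (u 0), toR3 (u 1), toR3 (u 2)})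
    (hp3 : toR3 p3 ∈ convexHull ℝ {toR3 (u 0), toR3 (u 1), toR3 (u 2)})
    (haff : AffineIndependent ℝ ![toR3 p1, toR3 p2, toR3 p3])
    (hempty : ∀ q : Fin 3 → ℤ, toR3 q ∈ convexHull ℝ {toR3 p1, toR3 p2, toR3 p3} →
      q = p1 ∨ q = p2 ∨ q = p3) :
    |(Matrix.of ![p1, p2, p3]).det| = (d : ℤ) := by
  obtain ⟨⟨-, -, -, -, hcoprime, -⟩, -⟩ := h
  obtain ⟨v, hv⟩ :=
    exists_dotProduct_eq_one_of_isCoprime (Nat.isCoprime_iff_coprime.mpr hcoprime) (w2 : ℤ)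
  have hu : {toR3 (u 0), toR3 (u 1), toR3 (u 2)} ⊆ polytopeOf w0 w1 w2 d := by
    simp [insert_subset_iff, hu_mem]
  exact (abs_det_eq_d_of_empty_triangle_general hv (dotProduct_eq_of_subset_polytopeOf hu hp1)
    (dotProduct_eq_of_subset_polytopeOf hu hp2) (dotProduct_eq_of_subset_polytopeOf hu hp3)
    ⟨haff, hempty⟩).trans (Nat.abs_cast d)
end

section
/- Let T ⊂ ℝ² be a nondegenerate triangle whose three vertices lie in ℤ², containing m lattice points in its interior and n lattice points on its boundary (including the three vertices), where n ≥ 3. Then there exist 2m + n − 2 triangles T₁, …, T₍2m+n−2₎, each with its three vertices among the m + n lattice points of T, with pairwise disjoint interiors, whose union equals T, and such that each Tᵢ contains no lattice point of ℤ² other than its three vertices. -/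
/-- The coercion of an integer lattice point of `ℤ²` to `ℝ²`. -/
def toR2 (v : Fin 2 → ℤ) : Fin 2 → ℝ := fun i => (v i : ℝ)

/-!
The volume of a simplex, normalized to be `1` on the standard simplex, is a determinant, and so are
the barycentric coordinates up to a common factor. Splitting a simplex at one of its lattice points
`q` into the cones from `q` over the facets not containing `q` loses a vertex from each piece, so
after finitely many splittings all pieces are empty, and the volumes still add up.

For a lattice triangle of normalized volume `D`, the half-open parallelogram spanned at one vertex
is a fundamental domain of a sublattice of index `D`, so it contains `D` lattice points. They are
the `m` interior points of the triangle, their `m` reflections in the midpoint of the opposite edge,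
and the `n` boundary points except two vertices; hence `D = 2 m + n - 2`. An empty triangle has
`m = 0` and `n = 3`, so `D = 1`, and the number of pieces is the volume of the triangle.
-/

open Function Set Matrix

section Volume

variable {R : Type*} [CommRing R] {n : ℕ}

/-- The matrix of homogeneous coordinates `(1, p i)` of the vertices of a simplex in `Rⁿ`. -/
def homogenization (p : Fin (n + 1) → Fin n → R) : Matrix (Fin (n + 1)) (Fin (n + 1)) R :=
  .of fun i => Fin.cons 1 (p i)

/-- The signed volume of a simplex in `Rⁿ`, normalized so that the standard simplex has volume `1`
(so it is `n!` times the usual one). The numbers `normalizedVolume (update p i q)`, divided by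
`normalizedVolume p`, are the barycentric coordinates of `q` with respect to `p`. -/
def normalizedVolume (p : Fin (n + 1) → Fin n → R) : R :=
  (homogenization p).det

lemma homogenization_update (p : Fin (n + 1) → Fin n → R) (i : Fin (n + 1)) (q : Fin n → R) :
    homogenization (update p i q) = (homogenization p).updateRow i (Fin.cons 1 q) := by
  ext j k
  obtain rfl | h := eq_or_ne j i <;> simp [homogenization, *]

lemma normalizedVolume_update (p : Fin (n + 1) → Fin n → R) (i : Fin (n + 1)) (q : Fin n → R) :
    normalizedVolume (update p i q) = cramer (homogenization p)ᵀ (Fin.cons 1 q) i := by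
  rw [cramer_transpose_apply, normalizedVolume, homogenization_update]

lemma normalizedVolume_map {S : Type*} [CommRing S] (f : R →+* S) (p : Fin (n + 1) → Fin n → R) :
    normalizedVolume (fun i => f ∘ p i) = f (normalizedVolume p) := by
  rw [normalizedVolume, normalizedVolume, f.map_det]
  congr 1
  ext i j
  cases j using Fin.cases <;> simp [homogenization]

lemma normalizedVolume_comp_perm (p : Fin (n + 1) → Fin n → R) (σ : Equiv.Perm (Fin (n + 1))) :
    normalizedVolume (p ∘ σ) = Equiv.Perm.sign σ * normalizedVolume p :=
  det_permute σ (homogenization p)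

lemma exists_perm_normalizedVolume_pos [LinearOrder R] [IsStrictOrderedRing R]
    {p : Fin (n + 2) → Fin (n + 1) → R} (hp : normalizedVolume p ≠ 0) :
    ∃ σ : Equiv.Perm (Fin (n + 2)), 0 < normalizedVolume (p ∘ σ) := by
  obtain hneg | hpos := hp.lt_or_gt
  · refine ⟨Equiv.swap 0 1, ?_⟩
    rw [normalizedVolume_comp_perm, Equiv.Perm.sign_swap zero_ne_one]
    simpa using hneg
  · exact ⟨1, hpos⟩

lemma normalizedVolume_update_of_ne (p : Fin (n + 1) → Fin n → R) {i j : Fin (n + 1)}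
    (h : i ≠ j) : normalizedVolume (update p i (p j)) = 0 :=
  det_zero_of_row_eq h (by ext; simp [homogenization, h.symm])

lemma injective_of_normalizedVolume_ne_zero {p : Fin (n + 1) → Fin n → R}
    (hp : normalizedVolume p ≠ 0) : Injective p := by
  refine fun i j hij => by_contra fun hne => hp ?_
  rw [← normalizedVolume_update_of_ne p hne, ← hij, update_eq_self]

lemma transpose_homogenization_mulVec (p : Fin (n + 1) → Fin n → R) (w : Fin (n + 1) → R) :
    (homogenization p)ᵀ *ᵥ w = Fin.cons (∑ i, w i) (∑ i, w i • p i) := by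
  ext j
  cases j using Fin.cases <;> simp [homogenization, mulVec, dotProduct, mul_comm]

lemma cons_sum_normalizedVolume_update (p : Fin (n + 1) → Fin n → R) (q : Fin n → R) :
    (Fin.cons (∑ i, normalizedVolume (update p i q))
      (∑ i, normalizedVolume (update p i q) • p i) : Fin (n + 1) → R) =
      normalizedVolume p • Fin.cons 1 q := by
  simp_rw [normalizedVolume_update]
  rw [← transpose_homogenization_mulVec, mulVec_cramer, det_transpose, normalizedVolume]

lemma sum_normalizedVolume_update (p : Fin (n + 1) → Fin n → R) (q : Fin n → R) :
    ∑ i, normalizedVolume (update p i q) = normalizedVolume p := by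
  simpa using congrFun (cons_sum_normalizedVolume_update p q) 0

lemma sum_normalizedVolume_update_smul (p : Fin (n + 1) → Fin n → R) (q : Fin n → R) :
    ∑ i, normalizedVolume (update p i q) • p i = normalizedVolume p • q := by
  ext j
  simpa using congrFun (cons_sum_normalizedVolume_update p q) j.succ

lemma normalizedVolume_update_add_sub (p : Fin (n + 1) → Fin n → R) (i : Fin (n + 1))
    (a b c : Fin n → R) :
    normalizedVolume (update p i (a + b - c)) = normalizedVolume (update p i a) +
      normalizedVolume (update p i b) - normalizedVolume (update p i c) := by
  have : (Fin.cons 1 (a + b - c) : Fin (n + 1) → R) =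
      Fin.cons 1 a + Fin.cons 1 b - Fin.cons 1 c := by
    ext j
    cases j using Fin.cases <;> simp
  simp only [normalizedVolume_update, this, map_add, map_sub, Pi.add_apply, Pi.sub_apply]

lemma normalizedVolume_update_update_vertex (p : Fin (n + 1) → Fin n → R) {i j : Fin (n + 1)}
    (h : i ≠ j) (q : Fin n → R) :
    normalizedVolume (update (update p i q) j (p i)) = -normalizedVolume (update p j q) := by
  have : update (update p i q) j (p i) = update p j q ∘ Equiv.swap i j := by
    ext k : 1
    obtain rfl | hj := eq_or_ne k j
    · simp [h]
    obtain rfl | hi := eq_or_ne k i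
    · simp [h]
    · simp [hi, hj, Equiv.swap_apply_of_ne_of_ne]
  rw [this, normalizedVolume_comp_perm, Equiv.Perm.sign_swap h]
  simp

lemma normalizedVolume_mul_update_update (p : Fin (n + 1) → Fin n → R) {i j : Fin (n + 1)}
    (h : i ≠ j) (q x : Fin n → R) :
    normalizedVolume p * normalizedVolume (update (update p i q) j x) =
      normalizedVolume (update p i q) * normalizedVolume (update p j x) -
        normalizedVolume (update p j q) * normalizedVolume (update p i x) := by
  set p' := update p i q with hp'
  let L := LinearMap.proj j ∘ₗ cramer (homogenization p')ᵀ
  have hL (y : Fin n → R) : L (Fin.cons 1 y) = normalizedVolume (update p' j y) :=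
    (normalizedVolume_update p' j y).symm
  have expand : normalizedVolume p • (Fin.cons 1 x : Fin (n + 1) → R) =
      ∑ k, normalizedVolume (update p k x) • Fin.cons 1 (p k) := by
    rw [← cons_sum_normalizedVolume_update]
    ext k
    cases k using Fin.cases <;> simp
  have other (k : Fin (n + 1)) (hk : k ≠ i ∧ k ≠ j) : normalizedVolume (update p' j (p k)) = 0 := by
    rw [show p k = p' k by simp [hp', hk.1], normalizedVolume_update_of_ne _ hk.2.symm]
  have vertex : update p' j (p j) = p' := by simp [hp', h.symm]
  calc normalizedVolume p * normalizedVolume (update p' j x)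
      = L (normalizedVolume p • Fin.cons 1 x) := by rw [map_smul, hL, smul_eq_mul]
    _ = ∑ k, normalizedVolume (update p k x) * normalizedVolume (update p' j (p k)) := by
        simp_rw [expand, map_sum, map_smul, hL, smul_eq_mul]
    _ = _ := by
        rw [Fintype.sum_eq_add i j h fun k hk => by rw [other k hk, mul_zero],
          normalizedVolume_update_update_vertex p h, vertex]
        ring

lemma normalizedVolume_eq_det_sub (p : Fin (n + 1) → Fin n → R) :
    normalizedVolume p = (of fun i => p (Fin.succ i) - p 0).det := by
  let B : Matrix (Fin (n + 1)) (Fin (n + 1)) R :=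
    of (Fin.cons (homogenization p 0) fun i => Fin.cons 0 (p i.succ - p 0))
  have : (homogenization p).det = B.det :=
    det_eq_of_forall_row_eq_smul_add_const (Fin.cons 0 fun _ => 1) 0 rfl fun i j => by
      cases i using Fin.cases <;> cases j using Fin.cases <;> simp [B, homogenization]
  have minor : B.submatrix (Fin.succAbove 0) Fin.succ = of fun i => p i.succ - p 0 := by
    ext i j
    simp [B]
  rw [normalizedVolume, this, det_succ_column_zero, Fin.sum_univ_succ, minor]
  simp [B, homogenization]

lemma eq_vertex_iff_normalizedVolume_update_eq_zero [IsDomain R] {p : Fin (n + 1) → Fin n → R}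
    (hp : normalizedVolume p ≠ 0) {i : Fin (n + 1)} {q : Fin n → R} :
    q = p i ↔ ∀ j, j ≠ i → normalizedVolume (update p j q) = 0 := by
  refine ⟨fun h j hj => h ▸ normalizedVolume_update_of_ne p hj, fun h => ?_⟩
  have hsum := sum_normalizedVolume_update p q
  have hsmul := sum_normalizedVolume_update_smul p q
  rw [Fintype.sum_eq_single i h] at hsum
  rw [Fintype.sum_eq_single i fun j hj => by rw [h j hj, zero_smul], hsum] at hsmul
  exact (smul_right_injective _ hp hsmul).symm

end Volume

section Simplex

variable {K : Type*} [Field K] {n : ℕ} {p : Fin (n + 1) → Fin n → K} {q x : Fin n → K}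
  {i : Fin (n + 1)}

lemma affineIndependent_iff_normalizedVolume_ne_zero :
    AffineIndependent K p ↔ normalizedVolume p ≠ 0 := by
  have key (w : Fin (n + 1) → K) :
      (homogenization p)ᵀ *ᵥ w = 0 ↔ ∑ i, w i = 0 ∧ ∑ i, w i • p i = 0 := by
    rw [transpose_homogenization_mulVec, ← Matrix.cons_zero_zero]
    exact Fin.cons_inj
  rw [normalizedVolume, ← det_transpose, Ne, ← exists_mulVec_eq_zero_iff,
    affineIndependent_iff_of_fintype]
  refine ⟨fun h ⟨w, hw, h0⟩ => hw ?_, fun h w hw hws => ?_⟩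
  · obtain ⟨h1, h2⟩ := (key w).1 h0
    refine funext fun i => h w h1 ?_ i
    rwa [Finset.weightedVSub_eq_linear_combination _ h1]
  · rw [Finset.weightedVSub_eq_linear_combination _ hw] at hws
    by_contra! hne
    obtain ⟨i, hi⟩ := hne
    exact h ⟨w, fun h0 => hi (congrFun h0 i), (key w).2 ⟨hw, hws⟩⟩

lemma exists_affineBasis_coord_eq (hp : normalizedVolume p ≠ 0) :
    ∃ b : AffineBasis (Fin (n + 1)) K (Fin n → K),
      ⇑b = p ∧ ∀ i x, b.coord i x = normalizedVolume (update p i x) / normalizedVolume p := by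
  have hind : AffineIndependent K p := affineIndependent_iff_normalizedVolume_ne_zero.2 hp
  have htop : affineSpan K (range p) = ⊤ :=
    hind.affineSpan_eq_top_iff_card_eq_finrank_add_one.2 (by simp)
  let b : AffineBasis (Fin (n + 1)) K (Fin n → K) := ⟨p, hind, htop⟩
  refine ⟨b, rfl, fun i x => ?_⟩
  let w := fun j => normalizedVolume (update p j x) / normalizedVolume p
  have hw : ∑ j, w j = 1 := by
    rw [← Finset.sum_div, sum_normalizedVolume_update, div_self hp]
  have hx : Finset.univ.affineCombination K b w = x := by
    rw [Finset.affineCombination_eq_linear_combination _ _ _ hw]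
    calc ∑ j, w j • p j
        = (normalizedVolume p)⁻¹ • ∑ j, normalizedVolume (update p j x) • p j := by
          simp only [w, Finset.smul_sum, smul_smul, div_eq_inv_mul]
      _ = x := by rw [sum_normalizedVolume_update_smul, inv_smul_smul₀ hp]
  calc b.coord i x = b.coord i (Finset.univ.affineCombination K b w) := by rw [hx]
    _ = w i := b.coord_apply_combination_of_mem (Finset.mem_univ i) hw

variable [LinearOrder K]

lemma convexHull_range_update_subset (hq : q ∈ convexHull K (range p)) :
    convexHull K (range (update p i q)) ⊆ convexHull K (range p) := by
  refine convexHull_min (range_subset_iff.2 fun j => ?_) (convex_convexHull K _)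
  obtain rfl | h := eq_or_ne j i
  · rwa [update_self]
  · rw [update_of_ne h]
    exact subset_convexHull K _ (mem_range_self j)

variable [IsStrictOrderedRing K]

lemma mem_convexHull_range_iff (hp : 0 < normalizedVolume p) :
    x ∈ convexHull K (range p) ↔ ∀ i, 0 ≤ normalizedVolume (update p i x) := by
  obtain ⟨b, hb, hcoord⟩ := exists_affineBasis_coord_eq hp.ne'
  rw [← hb, b.convexHull_eq_nonneg_coord, hb]
  simp only [hcoord, le_div_iff₀ hp, zero_mul, mem_ofPred_eq]

lemma convexHull_range_eq_iUnion_update (hp : 0 < normalizedVolume p)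
    (hq : q ∈ convexHull K (range p)) :
    ⋃ i : {i // 0 < normalizedVolume (update p i q)}, convexHull K (range (update p i q)) =
      convexHull K (range p) := by
  refine (iUnion_subset fun i => convexHull_range_update_subset hq).antisymm fun x hx => ?_
  rw [mem_convexHull_range_iff hp] at hq hx
  have hpos : ∃ i ∈ Finset.univ, 0 < normalizedVolume (update p i q) :=
    (Finset.sum_pos_iff_of_nonneg fun i _ => hq i).1 (by rwa [sum_normalizedVolume_update])
  -- The ray from `q` through `x` leaves the simplex through the facet opposite to the vertex `i`
  -- at which the barycentric coordinates of `x` and `q` have minimal ratio.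
  obtain ⟨i, hi, hmin⟩ := Finset.exists_min_image
    {i | 0 < normalizedVolume (update p i q)}
    (fun i => normalizedVolume (update p i x) / normalizedVolume (update p i q))
    (by simpa [Finset.filter_nonempty_iff] using hpos)
  simp only [Finset.mem_filter_univ] at hi hmin
  refine mem_iUnion.2 ⟨⟨i, hi⟩, (mem_convexHull_range_iff hi).2 fun j => ?_⟩
  obtain rfl | hij := eq_or_ne i j
  · rw [update_idem]
    exact hx i
  refine nonneg_of_mul_nonneg_right ?_ hp
  rw [normalizedVolume_mul_update_update p hij, sub_nonneg]
  obtain hj | hj := (hq j).eq_or_lt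
  · rw [← hj, zero_mul]
    exact mul_nonneg hi.le (hx j)
  · rw [mul_comm, mul_comm (normalizedVolume (update p i q)), ← div_le_div_iff₀ hi hj]
    exact hmin j hj

lemma vertex_notMem_convexHull_range_update (hp : 0 < normalizedVolume p)
    (hq : q ∈ convexHull K (range p)) (hi : 0 < normalizedVolume (update p i q)) (hne : q ≠ p i) :
    p i ∉ convexHull K (range (update p i q)) := by
  rw [mem_convexHull_range_iff hp] at hq
  rw [mem_convexHull_range_iff hi]
  refine fun h => hne ((eq_vertex_iff_normalizedVolume_update_eq_zero hp.ne').2 fun j hji => ?_)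
  have := h j
  rw [normalizedVolume_update_update_vertex p hji.symm] at this
  exact le_antisymm (neg_nonneg.1 this) (hq j)

lemma sum_normalizedVolume_update_of_pos (hp : 0 < normalizedVolume p)
    (hq : q ∈ convexHull K (range p)) :
    ∑ i : {i // 0 < normalizedVolume (update p i q)}, normalizedVolume (update p i q) =
      normalizedVolume p := by
  rw [mem_convexHull_range_iff hp] at hq
  rw [← sum_normalizedVolume_update p q, ← Finset.subtype_univ,
    Finset.sum_subtype_eq_sum_filter (fun i => normalizedVolume (update p i q))]
  exact Finset.sum_filter_of_ne fun i _ h => (hq i).lt_of_ne' h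

lemma mem_interior_convexHull_range_iff {p : Fin (n + 1) → Fin n → ℝ} {x : Fin n → ℝ}
    (hp : 0 < normalizedVolume p) :
    x ∈ interior (convexHull ℝ (range p)) ↔ ∀ i, 0 < normalizedVolume (update p i x) := by
  obtain ⟨b, hb, hcoord⟩ := exists_affineBasis_coord_eq hp.ne'
  rw [← hb, b.interior_convexHull, hb]
  simp only [hcoord, lt_div_iff₀ hp, zero_mul, mem_ofPred_eq]

lemma disjoint_interior_convexHull_range_update {p : Fin (n + 1) → Fin n → ℝ} {q : Fin n → ℝ}
    {i j : Fin (n + 1)} (hp : 0 < normalizedVolume p)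
    (hi : 0 < normalizedVolume (update p i q)) (hj : 0 < normalizedVolume (update p j q))
    (hij : i ≠ j) :
    Disjoint (interior (convexHull ℝ (range (update p i q))))
      (interior (convexHull ℝ (range (update p j q)))) := by
  refine disjoint_left.2 fun x hxi hxj => ?_
  rw [mem_interior_convexHull_range_iff ‹_›] at hxi hxj
  have h₁ := mul_pos hp (hxi j)
  have h₂ := mul_pos hp (hxj i)
  rw [normalizedVolume_mul_update_update p hij] at h₁
  rw [normalizedVolume_mul_update_update p hij.symm] at h₂
  linarith

end Simplex

section Dissection

variable {n : ℕ} {Λ X : Set (Fin n → ℝ)} {κ : Type*}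

/-- The family `s` of nondegenerate simplices with vertices in `Λ`, listed in positive orientation,
dissects `X` into simplices that are empty, i.e. contain no point of `Λ` besides their vertices. -/
structure IsEmptyDissection (Λ X : Set (Fin n → ℝ)) (s : κ → Fin (n + 1) → Fin n → ℝ) : Prop where
  vertex_mem (k : κ) (i : Fin (n + 1)) : s k i ∈ Λ
  volume_pos (k : κ) : 0 < normalizedVolume (s k)
  disjoint : Pairwise (Disjoint on fun k => interior (convexHull ℝ (range (s k))))
  iUnion_eq : ⋃ k, convexHull ℝ (range (s k)) = X
  empty (k : κ) : Λ ∩ convexHull ℝ (range (s k)) ⊆ range (s k)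

lemma IsEmptyDissection.sigma {ι : Type*} {κ : ι → Type*} {Y : ι → Set (Fin n → ℝ)}
    {s : ∀ i, κ i → Fin (n + 1) → Fin n → ℝ} (hs : ∀ i, IsEmptyDissection Λ (Y i) (s i))
    (hdisj : Pairwise (Disjoint on fun i => interior (Y i))) (hY : ⋃ i, Y i = X) :
    IsEmptyDissection Λ X fun k : Σ i, κ i => s k.1 k.2 where
  vertex_mem k := (hs k.1).vertex_mem k.2
  volume_pos k := (hs k.1).volume_pos k.2
  disjoint := by
    rintro ⟨i, k⟩ ⟨j, l⟩ hkl
    obtain rfl | hij := eq_or_ne i j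
    · exact (hs i).disjoint fun h => hkl (congrArg (Sigma.mk i) h)
    · have piece_subset (i : ι) (k : κ i) : convexHull ℝ (range (s i k)) ⊆ Y i :=
        (hs i).iUnion_eq ▸ subset_iUnion_of_subset k subset_rfl
      exact (hdisj hij).mono (interior_mono (piece_subset i k)) (interior_mono (piece_subset j l))
  iUnion_eq := by simp_rw [iUnion_sigma, (hs _).iUnion_eq, hY]
  empty k := (hs k.1).empty k.2

lemma IsEmptyDissection.comp_equiv {κ' : Type*} {s : κ → Fin (n + 1) → Fin n → ℝ}
    (hs : IsEmptyDissection Λ X s) (e : κ' ≃ κ) : IsEmptyDissection Λ X (s ∘ e) where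
  vertex_mem k := hs.vertex_mem (e k)
  volume_pos k := hs.volume_pos (e k)
  disjoint := hs.disjoint.comp_of_injective e.injective
  iUnion_eq := (e.surjective.iUnion_comp _).trans hs.iUnion_eq
  empty k := hs.empty (e k)

lemma isEmptyDissection_const {p : Fin (n + 1) → Fin n → ℝ} (hp : 0 < normalizedVolume p)
    (hΛ : ∀ i, p i ∈ Λ) (hempty : Λ ∩ convexHull ℝ (range p) ⊆ range p) :
    IsEmptyDissection Λ (convexHull ℝ (range p)) fun _ : Unit => p where
  vertex_mem _ := hΛ
  volume_pos _ := hp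
  disjoint := Subsingleton.pairwise
  iUnion_eq := iUnion_const _
  empty _ := hempty

theorem exists_isEmptyDissection (p : Fin (n + 1) → Fin n → ℝ) (hp : 0 < normalizedVolume p)
    (hΛ : ∀ i, p i ∈ Λ) (hfin : (Λ ∩ convexHull ℝ (range p)).Finite) :
    ∃ (κ : Type) (_ : Fintype κ) (s : κ → Fin (n + 1) → Fin n → ℝ),
      IsEmptyDissection Λ (convexHull ℝ (range p)) s ∧
        ∑ k, normalizedVolume (s k) = normalizedVolume p := by
  induction hN : (Λ ∩ convexHull ℝ (range p)).ncard using Nat.strong_induction_on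
    generalizing p with
  | _ N ih =>
  by_cases hempty : Λ ∩ convexHull ℝ (range p) ⊆ range p
  · exact ⟨Unit, inferInstance, fun _ => p, isEmptyDissection_const hp hΛ hempty, by simp⟩
  obtain ⟨q, ⟨hqΛ, hq⟩, hqp⟩ := not_subset.1 hempty
  have fewer (i : {i // 0 < normalizedVolume (update p i q)}) :
      Λ ∩ convexHull ℝ (range (update p i q)) ⊂ Λ ∩ convexHull ℝ (range p) :=
    (ssubset_iff_of_subset <| inter_subset_inter_right Λ (convexHull_range_update_subset hq)).2
      ⟨p i, ⟨hΛ i, subset_convexHull ℝ _ (mem_range_self _)⟩, fun h =>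
        vertex_notMem_convexHull_range_update hp hq i.2 (fun h => hqp ⟨i, h.symm⟩) h.2⟩
  have vertices (i : Fin (n + 1)) : ∀ j, update p i q j ∈ Λ :=
    (forall_update_iff p fun _ y => y ∈ Λ).2 ⟨hqΛ, fun j _ => hΛ j⟩
  choose κ hκ s hs hsum using fun i : {i // 0 < normalizedVolume (update p i q)} =>
    ih _ (hN ▸ ncard_lt_ncard (fewer i) hfin) (update p i q) i.2 (vertices i)
      (hfin.subset (fewer i).subset) rfl
  refine ⟨Σ i, κ i, inferInstance, fun k => s k.1 k.2, .sigma hs (fun i j hij => ?_)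
    (convexHull_range_eq_iUnion_update hp hq), ?_⟩
  · exact disjoint_interior_convexHull_range_update hp i.2 j.2 (Subtype.coe_injective.ne hij)
  · rw [Fintype.sum_sigma, ← sum_normalizedVolume_update_of_pos hp hq]
    exact Fintype.sum_congr _ _ hsum

end Dissection

section Parallelepiped

variable {ι : Type*} [Fintype ι] [DecidableEq ι]

lemma cramer_mulVec {R : Type*} [CommRing R] (A : Matrix ι ι R) (c : ι → R) :
    A.cramer (A *ᵥ c) = A.det • c := by
  rw [cramer_eq_adjugate_mulVec, mulVec_mulVec, adjugate_mul, smul_mulVec, one_mulVec]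

lemma natCard_quotient_range_mulVecLin {A : Matrix ι ι ℤ} (hA : A.det ≠ 0) :
    Nat.card ((ι → ℤ) ⧸ A.mulVecLin.range) = A.det.natAbs := by
  have hinj : Injective A.mulVecLin :=
    (injective_iff_map_eq_zero _).2 fun _ => eq_zero_of_mulVec_eq_zero hA
  rw [← A.mulVecLin.range.natAbs_det_equiv (LinearEquiv.ofInjective _ hinj), ← LinearMap.det_toLin']
  rfl

lemma ncard_setOf_cramer_mem_Ico {A : Matrix ι ι ℤ} (hA : 0 < A.det) :
    ({v | ∀ i, A.cramer v i ∈ Ico 0 A.det}.ncard : ℤ) = A.det := by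
  let proj (v : {v | ∀ i, A.cramer v i ∈ Ico 0 A.det}) : (ι → ℤ) ⧸ A.mulVecLin.range :=
    Submodule.Quotient.mk v.1
  have proj_bijective : Bijective proj := by
    refine ⟨fun v w hvw => ?_, fun y => ?_⟩
    · obtain ⟨c, hc⟩ := (Submodule.Quotient.eq _).1 hvw
      have hcramer (i : ι) : A.det * c i = A.cramer v.1 i - A.cramer w.1 i := by
        simpa [cramer_mulVec] using congrFun (congrArg A.cramer hc) i
      have hc0 : c = 0 := funext fun i => by
        have hlt : |A.det * c i| < A.det :=
          hcramer i ▸ abs_sub_lt_of_nonneg_of_lt (v.2 i).1 (v.2 i).2 (w.2 i).1 (w.2 i).2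
        simpa [hA.ne'] using Int.eq_zero_of_abs_lt_dvd (dvd_mul_right _ _) hlt
      rw [hc0, map_zero] at hc
      exact Subtype.ext (sub_eq_zero.1 hc.symm)
    · obtain ⟨u, rfl⟩ := Submodule.Quotient.mk_surjective _ y
      let c i := A.cramer u i / A.det
      refine ⟨⟨u - A *ᵥ c, fun i => ?_⟩, (Submodule.Quotient.eq _).2 ⟨-c, ?_⟩⟩
      · have : A.cramer (u - A *ᵥ c) i = A.cramer u i % A.det := by
          simp [cramer_mulVec, c, Int.emod_def]
        rw [this]
        exact ⟨Int.emod_nonneg _ hA.ne', Int.emod_lt_of_pos _ hA⟩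
      · simp [mulVec_neg]
  rw [← Nat.card_coe_set_eq, Nat.card_congr (.ofBijective proj proj_bijective),
    natCard_quotient_range_mulVecLin hA.ne', Int.natAbs_of_nonneg hA.le]

/-- The lattice points `t 0 + ∑ i, c i • (t i.succ - t 0)` with `0 ≤ c i < 1`, for a lattice simplex
`t`. The coefficients `c i` are the barycentric coordinates of the point at the vertices `t i.succ`,
here multiplied by the volume of `t` to stay in `ℤ`. -/
def halfOpenParallelepiped {n : ℕ} (t : Fin (n + 1) → Fin n → ℤ) : Set (Fin n → ℤ) :=
  {q | ∀ i : Fin n, normalizedVolume (update t i.succ q) ∈ Ico 0 (normalizedVolume t)}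

lemma ncard_halfOpenParallelepiped {n : ℕ} {t : Fin (n + 1) → Fin n → ℤ}
    (ht : 0 < normalizedVolume t) :
    ((halfOpenParallelepiped t).ncard : ℤ) = normalizedVolume t := by
  let A : Matrix (Fin n) (Fin n) ℤ := (of fun i => t (Fin.succ i) - t 0)ᵀ
  have hdet : normalizedVolume t = A.det := by rw [normalizedVolume_eq_det_sub, det_transpose]
  have hcramer (i : Fin n) (q : Fin n → ℤ) :
      normalizedVolume (update t i.succ q) = A.cramer (q - t 0) i := by
    have h0 : update t i.succ q 0 = t 0 := update_of_ne i.succ_ne_zero.symm ..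
    rw [normalizedVolume_eq_det_sub, cramer_transpose_apply]
    congr 1
    ext j k
    obtain rfl | h := eq_or_ne j i <;> simp [*]
  have hncard := ncard_preimage_of_injective_subset_range (Equiv.subRight (t 0)).injective
    (s := {v | ∀ i, A.cramer v i ∈ Ico 0 A.det}) (by simp)
  rw [hdet] at ht
  simp_rw [halfOpenParallelepiped, hcramer, hdet]
  exact (congrArg _ hncard).trans (ncard_setOf_cramer_mem_Ico ht)

end Parallelepiped

section LatticeTriangles

variable {t : Fin 3 → Fin 2 → ℤ} {q : Fin 2 → ℤ}

lemma toR2_injective : Injective toR2 :=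
  Int.cast_injective.comp_left

lemma finite_toR2_preimage {K : Set (Fin 2 → ℝ)} (hK : IsCompact K) : (toR2 ⁻¹' K).Finite :=
  have : Topology.IsClosedEmbedding toR2 := .piMap fun _ => Int.isClosedEmbedding_coe_real
  (this.isCompact_preimage hK).finite_of_discrete

lemma normalizedVolume_toR2_comp (t : Fin 3 → Fin 2 → ℤ) :
    normalizedVolume (toR2 ∘ t) = normalizedVolume t :=
  normalizedVolume_map (Int.castRingHom ℝ) t

lemma normalizedVolume_toR2_comp_pos :
    0 < normalizedVolume (toR2 ∘ t) ↔ 0 < normalizedVolume t := by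
  rw [normalizedVolume_toR2_comp, Int.cast_pos]

/-- The lattice triangle with vertices `t 0`, `t 1` and `t 2`. -/
def latticeTriangle (t : Fin 3 → Fin 2 → ℤ) : Set (Fin 2 → ℝ) :=
  convexHull ℝ (range (toR2 ∘ t))

/-- The lattice points in the interior of a lattice triangle. -/
def interiorPoints (t : Fin 3 → Fin 2 → ℤ) : Set (Fin 2 → ℤ) :=
  {q | toR2 q ∈ interior (latticeTriangle t)}

/-- The lattice points on the boundary of a lattice triangle. -/
def boundaryPoints (t : Fin 3 → Fin 2 → ℤ) : Set (Fin 2 → ℤ) :=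
  {q | toR2 q ∈ frontier (latticeTriangle t)}

lemma isCompact_latticeTriangle (t : Fin 3 → Fin 2 → ℤ) : IsCompact (latticeTriangle t) :=
  (finite_range _).isCompact_convexHull ℝ

lemma frontier_latticeTriangle_subset (t : Fin 3 → Fin 2 → ℤ) :
    frontier (latticeTriangle t) ⊆ latticeTriangle t :=
  (isCompact_latticeTriangle t).isClosed.frontier_subset

lemma finite_interiorPoints (t : Fin 3 → Fin 2 → ℤ) : (interiorPoints t).Finite :=
  (finite_toR2_preimage (isCompact_latticeTriangle t)).subset (preimage_mono interior_subset)

lemma finite_boundaryPoints (t : Fin 3 → Fin 2 → ℤ) : (boundaryPoints t).Finite :=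
  (finite_toR2_preimage (isCompact_latticeTriangle t)).subset
    (preimage_mono (frontier_latticeTriangle_subset t))

lemma toR2_mem_latticeTriangle_iff (ht : 0 < normalizedVolume t) :
    toR2 q ∈ latticeTriangle t ↔ ∀ i, 0 ≤ normalizedVolume (update t i q) := by
  rw [latticeTriangle, mem_convexHull_range_iff (normalizedVolume_toR2_comp_pos.2 ht)]
  simp_rw [← comp_update, normalizedVolume_toR2_comp, Int.cast_nonneg_iff]

lemma mem_interiorPoints_iff (ht : 0 < normalizedVolume t) :
    q ∈ interiorPoints t ↔ ∀ i, 0 < normalizedVolume (update t i q) := by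
  rw [interiorPoints, mem_ofPred_eq, latticeTriangle,
    mem_interior_convexHull_range_iff (normalizedVolume_toR2_comp_pos.2 ht)]
  simp_rw [← comp_update, normalizedVolume_toR2_comp_pos]

lemma mem_boundaryPoints_iff (ht : 0 < normalizedVolume t) :
    q ∈ boundaryPoints t ↔
      (∀ i, 0 ≤ normalizedVolume (update t i q)) ∧ ∃ i, normalizedVolume (update t i q) = 0 := by
  have hdiff : q ∈ boundaryPoints t ↔ toR2 q ∈ latticeTriangle t ∧ q ∉ interiorPoints t := by
    rw [boundaryPoints, mem_ofPred_eq, (isCompact_latticeTriangle t).isClosed.frontier_eq]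
    rfl
  rw [hdiff, toR2_mem_latticeTriangle_iff ht, mem_interiorPoints_iff ht, not_forall]
  refine and_congr_right fun h => exists_congr fun i => ?_
  rw [not_lt, (h i).ge_iff_eq']

lemma vertex_mem_boundaryPoints (ht : 0 < normalizedVolume t) (i : Fin 3) :
    t i ∈ boundaryPoints t := by
  obtain ⟨k, hk⟩ := exists_ne i
  refine (mem_boundaryPoints_iff ht).2 ⟨fun j => ?_, k, normalizedVolume_update_of_ne t hk⟩
  obtain rfl | h := eq_or_ne j i
  · rw [update_eq_self]
    exact ht.le
  · rw [normalizedVolume_update_of_ne t h]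

/-- The point reflection of `ℤ²` that swaps the vertices `t 1` and `t 2` of a triangle. Its center
is the midpoint of an edge, so it need not be a lattice point. -/
def edgeReflection (t : Fin 3 → Fin 2 → ℤ) : (Fin 2 → ℤ) ≃ (Fin 2 → ℤ) :=
  Equiv.subLeft (t 1 + t 2)

lemma normalizedVolume_update_zero_edgeReflection (t : Fin 3 → Fin 2 → ℤ) (q : Fin 2 → ℤ) :
    normalizedVolume (update t 0 (edgeReflection t q)) = -normalizedVolume (update t 0 q) := by
  simpa [edgeReflection, normalizedVolume_update_of_ne] using
    normalizedVolume_update_add_sub t 0 (t 1) (t 2) q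

lemma normalizedVolume_update_one_edgeReflection (t : Fin 3 → Fin 2 → ℤ) (q : Fin 2 → ℤ) :
    normalizedVolume (update t 1 (edgeReflection t q)) =
      normalizedVolume t - normalizedVolume (update t 1 q) := by
  simpa [edgeReflection, normalizedVolume_update_of_ne] using
    normalizedVolume_update_add_sub t 1 (t 1) (t 2) q

lemma normalizedVolume_update_two_edgeReflection (t : Fin 3 → Fin 2 → ℤ) (q : Fin 2 → ℤ) :
    normalizedVolume (update t 2 (edgeReflection t q)) =
      normalizedVolume t - normalizedVolume (update t 2 q) := by
  simpa [edgeReflection, normalizedVolume_update_of_ne] using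
    normalizedVolume_update_add_sub t 2 (t 1) (t 2) q

lemma halfOpenParallelepiped_eq_union (ht : 0 < normalizedVolume t) :
    halfOpenParallelepiped t =
      interiorPoints t ∪ edgeReflection t ⁻¹' interiorPoints t ∪ boundaryPoints t \ {t 1, t 2} := by
  ext q
  have hsum := sum_normalizedVolume_update t q
  rw [Fin.sum_univ_three] at hsum
  have eq_one_iff : q = t 1 ↔
      normalizedVolume (update t 0 q) = 0 ∧ normalizedVolume (update t 2 q) = 0 := by
    simp [eq_vertex_iff_normalizedVolume_update_eq_zero ht.ne', Fin.forall_fin_succ]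
  have eq_two_iff : q = t 2 ↔
      normalizedVolume (update t 0 q) = 0 ∧ normalizedVolume (update t 1 q) = 0 := by
    simp [eq_vertex_iff_normalizedVolume_update_eq_zero ht.ne', Fin.forall_fin_succ]
  simp only [halfOpenParallelepiped, mem_ofPred_eq, mem_union, mem_preimage, mem_sdiff,
    mem_insert_iff, mem_singleton_iff,
    mem_Ico, mem_interiorPoints_iff ht, mem_boundaryPoints_iff ht, eq_one_iff, eq_two_iff,
    Fin.forall_fin_two, Fin.forall_fin_succ (n := 2), Fin.exists_fin_succ (n := 2),
    Fin.exists_fin_two, Fin.succ_zero_eq_one, Fin.succ_one_eq_two,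
    normalizedVolume_update_zero_edgeReflection, normalizedVolume_update_one_edgeReflection,
    normalizedVolume_update_two_edgeReflection]
  omega

lemma disjoint_interiorPoints_edgeReflection_preimage (ht : 0 < normalizedVolume t) :
    Disjoint (interiorPoints t) (edgeReflection t ⁻¹' interiorPoints t) := by
  refine disjoint_left.2 fun q hq hq' => ?_
  have h := (mem_interiorPoints_iff ht).1 hq 0
  have h' := (mem_interiorPoints_iff ht).1 hq' 0
  rw [normalizedVolume_update_zero_edgeReflection] at h'
  omega

lemma disjoint_interiorPoints_union_boundaryPoints (ht : 0 < normalizedVolume t) :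
    Disjoint (interiorPoints t ∪ edgeReflection t ⁻¹' interiorPoints t) (boundaryPoints t) := by
  refine disjoint_right.2 fun q hq => ?_
  rintro (hq' | hq')
  · exact hq.2 hq'
  · have h := ((mem_boundaryPoints_iff ht).1 hq).1 0
    have h' := (mem_interiorPoints_iff ht).1 hq' 0
    rw [normalizedVolume_update_zero_edgeReflection] at h'
    omega

/-- **Pick's theorem** for triangles. -/
theorem normalizedVolume_add_two_eq (ht : 0 < normalizedVolume t) :
    normalizedVolume t + 2 = 2 * (interiorPoints t).ncard + (boundaryPoints t).ncard := by
  have hinj := injective_of_normalizedVolume_ne_zero ht.ne'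
  have hboundary := ncard_sdiff_add_ncard_of_subset
    (pair_subset (vertex_mem_boundaryPoints ht 1) (vertex_mem_boundaryPoints ht 2))
    (finite_boundaryPoints t)
  rw [ncard_pair (hinj.ne (by decide))] at hboundary
  have hreflect : (edgeReflection t ⁻¹' interiorPoints t).ncard = (interiorPoints t).ncard :=
    ncard_preimage_of_injective_subset_range (edgeReflection t).injective (by simp)
  have hI := finite_interiorPoints t
  have hI' := hI.preimage (edgeReflection t).injective.injOn
  have hP := ncard_halfOpenParallelepiped ht
  rw [halfOpenParallelepiped_eq_union ht,
    ncard_union_eq ((disjoint_interiorPoints_union_boundaryPoints ht).mono_right sdiff_subset)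
      (hI.union hI') (finite_boundaryPoints t).sdiff,
    ncard_union_eq (disjoint_interiorPoints_edgeReflection_preimage ht) hI hI', hreflect] at hP
  omega

lemma normalizedVolume_eq_one_of_empty (ht : 0 < normalizedVolume t)
    (hempty : ∀ q, toR2 q ∈ latticeTriangle t → q ∈ range t) : normalizedVolume t = 1 := by
  have hI : interiorPoints t = ∅ := by
    refine eq_empty_of_forall_notMem fun q hq => ?_
    obtain ⟨i, rfl⟩ := hempty q (interior_subset hq)
    exact (vertex_mem_boundaryPoints ht i).2 hq
  have hF : (boundaryPoints t).ncard ≤ 3 := calc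
    _ ≤ (range t).ncard := ncard_le_ncard
      (fun q hq => hempty q (frontier_latticeTriangle_subset t hq)) (finite_range t)
    _ ≤ 3 := by simpa [image_univ, ncard_univ] using ncard_image_le (f := t) finite_univ
  have hpick := normalizedVolume_add_two_eq ht
  rw [hI, ncard_empty] at hpick
  omega

lemma IsEmptyDissection.mem_range_of_toR2_mem {κ : Type*} {X : Set (Fin 2 → ℝ)}
    {s : κ → Fin 3 → Fin 2 → ℤ} (hs : IsEmptyDissection (range toR2) X fun k => toR2 ∘ s k) {k : κ}
    (hq : toR2 q ∈ latticeTriangle (s k)) : q ∈ range (s k) := by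
  obtain ⟨i, hi⟩ := hs.empty k ⟨mem_range_self q, hq⟩
  exact ⟨i, toR2_injective hi⟩

theorem exists_isEmptyDissection_latticeTriangle (ht : 0 < normalizedVolume t) :
    ∃ s : Fin (normalizedVolume t).toNat → Fin 3 → Fin 2 → ℤ,
      IsEmptyDissection (range toR2) (latticeTriangle t) fun k => toR2 ∘ s k := by
  have hfin : (range toR2 ∩ latticeTriangle t).Finite := by
    rw [inter_comm, ← image_preimage_eq_inter_range]
    exact (finite_toR2_preimage (isCompact_latticeTriangle t)).image _
  obtain ⟨κ, _, s, hs, hsum⟩ := exists_isEmptyDissection (toR2 ∘ t)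
    (normalizedVolume_toR2_comp_pos.2 ht) (fun i => mem_range_self (t i)) hfin
  choose u hu using hs.vertex_mem
  obtain rfl : (fun k => toR2 ∘ u k) = s := funext₂ hu
  have hone (k : κ) : normalizedVolume (u k) = 1 :=
    normalizedVolume_eq_one_of_empty (normalizedVolume_toR2_comp_pos.1 (hs.volume_pos k))
      fun _ => hs.mem_range_of_toR2_mem
  have hcard : (Fintype.card κ : ℤ) = normalizedVolume t := by
    simp only [normalizedVolume_toR2_comp, hone, Int.cast_one, Finset.sum_const, Finset.card_univ,
      nsmul_one] at hsum
    exact_mod_cast hsum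
  exact ⟨_, hs.comp_equiv (Fintype.equivFinOfCardEq (by omega)).symm⟩

lemma latticeTriangle_eq_convexHull (t : Fin 3 → Fin 2 → ℤ) :
    latticeTriangle t = convexHull ℝ {toR2 (t 0), toR2 (t 1), toR2 (t 2)} := by
  rw [latticeTriangle]
  congr 1
  ext x
  simp [Fin.exists_fin_succ, eq_comm]

lemma vec_toR2_eq_comp (t : Fin 3 → Fin 2 → ℤ) :
    ![toR2 (t 0), toR2 (t 1), toR2 (t 2)] = toR2 ∘ t :=
  FinVec.etaExpand_eq (toR2 ∘ t)

lemma exists_latticeTriangle_eq_normalizedVolume_pos (ht : AffineIndependent ℝ (toR2 ∘ t)) :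
    ∃ p, latticeTriangle p = latticeTriangle t ∧ 0 < normalizedVolume p := by
  rw [affineIndependent_iff_normalizedVolume_ne_zero, normalizedVolume_toR2_comp,
    Int.cast_ne_zero] at ht
  obtain ⟨σ, hσ⟩ := exists_perm_normalizedVolume_pos ht
  refine ⟨t ∘ σ, ?_, hσ⟩
  rw [latticeTriangle, latticeTriangle, ← comp_assoc, σ.surjective.range_comp]

end LatticeTriangles

/-- A nondegenerate lattice triangle in `ℝ²` with `m` interior lattice points and `n ≥ 3`
boundary lattice points (including its vertices) can be subdivided into `2m + n - 2` lattice
triangles with pairwise disjoint interiors whose union is the original triangle, each containing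
no lattice points other than its three vertices. -/
theorem triangulation_into_empty_triangles (A B C : Fin 2 → ℤ)
    (hABC : AffineIndependent ℝ ![toR2 A, toR2 B, toR2 C])
    (m n : ℕ)
    (hm : {q : Fin 2 → ℤ | toR2 q ∈ interior (convexHull ℝ {toR2 A, toR2 B, toR2 C})}.ncard = m)
    (hn : {q : Fin 2 → ℤ | toR2 q ∈ frontier (convexHull ℝ {toR2 A, toR2 B, toR2 C})}.ncard = n)
    (hn3 : 3 ≤ n) :
    ∃ t : Fin (2 * m + n - 2) → Fin 3 → Fin 2 → ℤ,
      (∀ i j, toR2 (t i j) ∈ convexHull ℝ {toR2 A, toR2 B, toR2 C}) ∧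
      (∀ i, AffineIndependent ℝ ![toR2 (t i 0), toR2 (t i 1), toR2 (t i 2)]) ∧
      (∀ i i', i ≠ i' →
        interior (convexHull ℝ {toR2 (t i 0), toR2 (t i 1), toR2 (t i 2)}) ∩
          interior (convexHull ℝ {toR2 (t i' 0), toR2 (t i' 1), toR2 (t i' 2)}) = ∅) ∧
      (⋃ i, convexHull ℝ {toR2 (t i 0), toR2 (t i 1), toR2 (t i 2)})
        = convexHull ℝ {toR2 A, toR2 B, toR2 C} ∧
      (∀ i (q : Fin 2 → ℤ), toR2 q ∈ convexHull ℝ {toR2 (t i 0), toR2 (t i 1), toR2 (t i 2)} →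
        q = t i 0 ∨ q = t i 1 ∨ q = t i 2) := by
  obtain ⟨p, hp, hpos⟩ :=
    exists_latticeTriangle_eq_normalizedVolume_pos (t := ![A, B, C]) (vec_toR2_eq_comp _ ▸ hABC)
  have hT : convexHull ℝ {toR2 A, toR2 B, toR2 C} = latticeTriangle p :=
    (hp.trans (latticeTriangle_eq_convexHull _)).symm
  rw [hT] at hm hn ⊢
  have hcard : (normalizedVolume p).toNat = 2 * m + n - 2 := by
    have hpick := normalizedVolume_add_two_eq hpos
    rw [interiorPoints, hm, boundaryPoints, hn] at hpick
    omega
  obtain ⟨t, ht⟩ := hcard ▸ exists_isEmptyDissection_latticeTriangle hpos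
  simp only [← latticeTriangle_eq_convexHull, vec_toR2_eq_comp]
  refine ⟨t, fun i j => ?_, fun i => ?_, fun i i' h => (ht.disjoint h).inter_eq, ht.iUnion_eq,
    fun i q hq => ?_⟩
  · exact ht.iUnion_eq ▸ mem_iUnion_of_mem i (subset_convexHull ℝ _ (mem_range_self j))
  · exact affineIndependent_iff_normalizedVolume_ne_zero.2 (ht.volume_pos i).ne'
  · simpa [Fin.exists_fin_succ, eq_comm] using ht.mem_range_of_toR2_mem hq
end
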